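/- Let G = ([n], E) be the (n−1)-star graph, i.e., the graph on n vertices in which one central vertex is adjacent to each of the other n−1 vertices and there are no other edges. For d = n, the divisor class group of the normal Noetherian domain R_G(n) satisfies Cl(R_G(n)) ≅ ℤ. -/

import Mathlib

open MvPolynomial nonZeroDivisors

/-- The Lovász–Saks–Schrijver ideal `L_G(d)` of a simple graph `G`. -/
noncomputable def lssIdeal (K : Type) [Field K] {V : Type} (G : SimpleGraph V) (d : ℕ) :
    Ideal (MvPolynomial (V × Fin d) K) :=
  Ideal.span {f | ∃ i j : V, G.Adj i j ∧
    f = ∑ k : Fin d, MvPolynomial.X (i, k) * MvPolynomial.X (j, k)}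

/-- The `(n-1)`-star graph on `n` vertices: the last vertex is adjacent to all the
other vertices, and there are no other edges. -/
def starGraph (n : ℕ) (hn : 2 ≤ n) : SimpleGraph (Fin n) :=
  SimpleGraph.fromRel fun i _ => i = (⟨n - 1, by omega⟩ : Fin n)

section DivisorClassGroup

variable (R : Type) [CommRing R] [IsDomain R]
variable (F : Type) [Field F] [Algebra R F] [IsFractionRing R F]

/-- The divisorial closure `(I⁻¹)⁻¹` of a fractional ideal; a fractional ideal is
divisorial when it equals its divisorial closure. -/
noncomputable def divisorialClosure (I : FractionalIdeal R⁰ F) : FractionalIdeal R⁰ F :=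
  1 / (1 / I)

/-- The `n`-th power of a nonzero fractional ideal in the group of divisorial ideals:
for `n ≥ 0` the divisorial closure of `Iⁿ`, and for `n < 0` the divisorial closure of
`(1/I)^{-n}`. -/
noncomputable def divZPow (I : FractionalIdeal R⁰ F) (m : ℤ) : FractionalIdeal R⁰ F :=
  if 0 ≤ m then divisorialClosure R F (I ^ m.toNat)
  else divisorialClosure R F ((1 / I) ^ (-m).toNat)

/-- Two (nonzero) fractional ideals define the same divisor class iff their divisorial
closures differ by a principal fractional ideal. -/
def SameDivisorClass (I J : FractionalIdeal R⁰ F) : Prop :=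
  ∃ a : F, a ≠ 0 ∧
    divisorialClosure R F I = divisorialClosure R F (FractionalIdeal.spanSingleton R⁰ a * J)

/-- The divisor class group of `R` (divisorial fractional ideals modulo principal ones)
is free abelian of rank `r`: there are `r` nonzero fractional ideals whose divisor
classes form a `ℤ`-basis, i.e. every nonzero fractional ideal has the divisor class of a
unique `ℤ`-linear combination of them. -/
def DivisorClassGroupIsFreeOfRank (r : ℕ) : Prop :=
  ∃ I : Fin r → FractionalIdeal R⁰ F,
    (∀ i, I i ≠ 0) ∧
    (∀ J : FractionalIdeal R⁰ F, J ≠ 0 →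
      ∃ v : Fin r → ℤ, SameDivisorClass R F (∏ i, divZPow R F (I i) (v i)) J) ∧
    ∀ v w : Fin r → ℤ,
      SameDivisorClass R F (∏ i, divZPow R F (I i) (v i)) (∏ i, divZPow R F (I i) (w i)) →
        v = w

end DivisorClassGroup


namespace LSSAux

/-- Polynomial version of the step lemma. -/
lemma poly_step {A : Type*} [CommRing A] (I X : Ideal A) (x g : A)
    (h : ∀ b ∈ X, x * b ∈ I → b ∈ I) (b : Polynomial A)
    (hb : b ∈ X.map (Polynomial.C : A →+* Polynomial A))
    (hb' : (Polynomial.C x * Polynomial.X + Polynomial.C g) * b ∈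
      I.map (Polynomial.C : A →+* Polynomial A)) :
    b ∈ I.map (Polynomial.C : A →+* Polynomial A) := by
  rw [Ideal.mem_map_C_iff] at *
  have key : ∀ t k : ℕ, b.natDegree < k + t → b.coeff k ∈ I := by
    intro t
    induction t with
    | zero =>
      intro k hk
      rw [Polynomial.coeff_eq_zero_of_natDegree_lt (by simpa using hk)]
      exact I.zero_mem
    | succ t ih =>
      intro k hk
      have h1 := ih (k + 1) (by omega)
      have h2 := hb' (k + 1)
      have h3 : ((Polynomial.C x * Polynomial.X + Polynomial.C g) * b).coeff (k + 1)
          = x * b.coeff k + g * b.coeff (k + 1) := by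
        rw [add_mul, Polynomial.coeff_add, mul_assoc, Polynomial.coeff_C_mul,
          Polynomial.coeff_X_mul, Polynomial.coeff_C_mul]
      rw [h3] at h2
      exact h _ (hb k) ((Ideal.add_mem_iff_left I (I.mul_mem_left g h1)).1 h2)
  intro k
  exact key (b.natDegree + 1) k (by omega)

/-- the inclusion of the polynomial ring in all variables but `v` -/
noncomputable def inc (K : Type*) [Field K] {σ : Type*} (v : σ) :
    MvPolynomial {w // w ≠ v} K →ₐ[K] MvPolynomial σ K := MvPolynomial.rename Subtype.val

/-- single out the variable `v` -/
noncomputable def single (K : Type*) [Field K] {σ : Type*} [DecidableEq σ] (v : σ) :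
    MvPolynomial σ K ≃ₐ[K] Polynomial (MvPolynomial {w // w ≠ v} K) :=
  (MvPolynomial.renameEquiv K (Equiv.optionSubtypeNe v).symm).trans
    (MvPolynomial.optionEquivLeft K _)

lemma single_X (K : Type*) [Field K] {σ : Type*} [DecidableEq σ] (v : σ) :
    single K v (X v) = Polynomial.X := by
  simp [single]

lemma single_inc (K : Type*) [Field K] {σ : Type*} [DecidableEq σ] (v : σ)
    (p : MvPolynomial {w // w ≠ v} K) : single K v (inc K v p) = Polynomial.C p := by
  induction p using MvPolynomial.induction_on with
  | C a => simp [single, inc]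
  | add p q hp hq => rw [map_add, map_add, hp, hq, map_add]
  | mul_X p w hp =>
    rw [map_mul, map_mul, hp, map_mul]
    congr 1
    simp [single, inc, Equiv.optionSubtypeNe_symm_of_ne w.2]

lemma map_single_map_inc (K : Type*) [Field K] {σ : Type*} [DecidableEq σ] (v : σ)
    (I : Ideal (MvPolynomial {w // w ≠ v} K)) (p : MvPolynomial σ K) :
    p ∈ I.map (inc K v) ↔ single K v p ∈ I.map
      (Polynomial.C : MvPolynomial {w // w ≠ v} K →+* Polynomial (MvPolynomial {w // w ≠ v} K)) := by
  have h : I.map (Polynomial.C : MvPolynomial {w // w ≠ v} K →+*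
      Polynomial (MvPolynomial {w // w ≠ v} K)) = (I.map (inc K v)).map (single K v) := by
    rw [← Ideal.map_coe (inc K v), ← Ideal.map_coe (single K v), Ideal.map_map]
    congr 1
    exact RingHom.ext fun q => (single_inc K v q).symm
  rw [h]
  constructor
  · exact fun hp => Ideal.mem_map_of_mem _ hp
  · intro hp
    obtain ⟨q, hq, e⟩ := (Ideal.mem_map_of_equiv (single K v) _).1 hp
    rwa [← (single K v).injective e]

lemma span_free (K : Type*) [Field K] {σ : Type*} (v : σ) (s : Set (MvPolynomial σ K))
    (hs : ∀ p ∈ s, p ∈ (inc K v).range) :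
    ∃ I' : Ideal (MvPolynomial {w // w ≠ v} K), Ideal.span s = I'.map (inc K v) := by
  refine ⟨Ideal.span (inc K v ⁻¹' s), ?_⟩
  rw [Ideal.map_span, Set.image_preimage_eq_of_subset]
  intro p hp
  exact hs p hp

/-- The step lemma in the multivariate polynomial ring. -/
lemma mv_step (K : Type*) [Field K] {σ : Type*} [DecidableEq σ] (v : σ)
    (s t : Set (MvPolynomial σ K))
    (hs : ∀ p ∈ s, p ∈ (inc K v).range) (ht : ∀ p ∈ t, p ∈ (inc K v).range)
    (x g : MvPolynomial σ K) (hx : x ∈ (inc K v).range) (hg : g ∈ (inc K v).range)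
    (h : ∀ b ∈ Ideal.span t, x * b ∈ Ideal.span s → b ∈ Ideal.span s)
    (b : MvPolynomial σ K) (hb : b ∈ Ideal.span t) (hb' : (x * X v + g) * b ∈ Ideal.span s) :
    b ∈ Ideal.span s := by
  obtain ⟨I, hI⟩ := span_free K v s hs
  obtain ⟨J, hJ⟩ := span_free K v t ht
  obtain ⟨x, rfl⟩ := hx
  obtain ⟨g, rfl⟩ := hg
  rw [hJ] at hb
  rw [hI] at hb' ⊢
  rw [hI, hJ] at h
  have hC : ∀ (I : Ideal (MvPolynomial {w // w ≠ v} K)) (p), inc K v p ∈ I.map (inc K v) ↔ p ∈ I := by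
    intro I p
    rw [map_single_map_inc, single_inc, Ideal.mem_map_C_iff]
    constructor
    · intro h; simpa using h 0
    · intro h k
      rw [Polynomial.coeff_C]
      split_ifs
      · exact h
      · exact I.zero_mem
  rw [map_single_map_inc] at hb hb' ⊢
  refine poly_step I J x g ?_ _ hb ?_
  · intro c hc hc'
    have := h (inc K v c) ((hC _ _).2 hc)
    rw [hC] at this
    apply this
    have h2 := (hC I (x * c)).2 hc'
    rw [map_mul] at h2
    exact h2
  · have e : single K v (((inc K v) x * X v + (inc K v) g) * b) =
      (Polynomial.C x * Polynomial.X + Polynomial.C g) * single K v b := by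
      rw [map_mul, map_add, map_mul, single_inc, single_inc, single_X]
    rw [← e]; exact hb'

lemma X_mem_inc (K : Type*) [Field K] {σ : Type*} {v w : σ} (h : w ≠ v) :
    (X w : MvPolynomial σ K) ∈ (inc K v).range :=
  ⟨X ⟨w, h⟩, by simp [inc]⟩

/-- kill the variables in `s` -/
noncomputable def kill (K : Type*) [Field K] {σ : Type*} (s : Set σ) :
    MvPolynomial σ K →ₐ[K] MvPolynomial σ K :=
  open Classical in MvPolynomial.aeval fun v => if v ∈ s then 0 else X v

lemma kill_sub_mem (K : Type*) [Field K] {σ : Type*} (s : Set σ) (p : MvPolynomial σ K) :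
    p - kill K s p ∈ Ideal.span (X '' s : Set (MvPolynomial σ K)) := by
  have : (Ideal.Quotient.mkₐ K (Ideal.span (X '' s : Set (MvPolynomial σ K)))) =
      (Ideal.Quotient.mkₐ K (Ideal.span (X '' s : Set (MvPolynomial σ K)))).comp (kill K s) := by
    classical
    ext v
    simp only [kill, AlgHom.comp_apply, aeval_X]
    split_ifs with h
    · rw [map_zero]
      exact Ideal.Quotient.eq_zero_iff_mem.2 (Ideal.subset_span ⟨v, h, rfl⟩)
    · rfl
  exact Ideal.Quotient.eq.1 (DFunLike.congr_fun this p)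

lemma mem_span_X_iff (K : Type*) [Field K] {σ : Type*} (s : Set σ) (p : MvPolynomial σ K) :
    p ∈ Ideal.span (X '' s : Set (MvPolynomial σ K)) ↔ kill K s p = 0 := by
  constructor
  · intro hp
    have : Ideal.span (X '' s : Set (MvPolynomial σ K)) ≤ RingHom.ker (kill K s) := by
      rw [Ideal.span_le]
      rintro _ ⟨v, hv, rfl⟩
      simp [kill, hv]
    exact this hp
  · intro hp
    have := kill_sub_mem K s p
    rwa [hp, sub_zero] at this

lemma X_nzd_span (K : Type*) [Field K] {σ : Type*} (s : Set σ) (v : σ) (hv : v ∉ s)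
    (p : MvPolynomial σ K) (h : X v * p ∈ Ideal.span (X '' s : Set (MvPolynomial σ K))) :
    p ∈ Ideal.span (X '' s : Set (MvPolynomial σ K)) := by
  rw [mem_span_X_iff] at *
  rw [map_mul] at h
  have : kill K s (X v) = X v := by simp [kill, hv]
  rw [this] at h
  exact (mul_eq_zero.1 h).resolve_left (X_ne_zero v)

section star
variable (K : Type*) [Field K] {n : ℕ} (l : Fin n)

/-- the generator attached to row `i` -/
noncomputable def ff (i : Fin n) : MvPolynomial (Fin n × Fin n) K :=
  ∑ k : Fin n, X (l, k) * X (i, k)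

/-- center variables with index below `r` -/
def cset (r : ℕ) : Set (Fin n × Fin n) := {v | v.1 = l ∧ v.2.val < r}

/-- the first `j` generators together with the first `r` center variables -/
def gens (j r : ℕ) : Set (MvPolynomial (Fin n × Fin n) K) :=
  {p | ∃ i : Fin n, i.val < j ∧ p = ff K l i} ∪ X '' (cset l r)

/-- the ideal generated by `gens` -/
noncomputable abbrev LX (j r : ℕ) : Ideal (MvPolynomial (Fin n × Fin n) K) :=
  Ideal.span (gens K l j r)

/-- the ideal of all center variables -/
noncomputable abbrev XX : Ideal (MvPolynomial (Fin n × Fin n) K) :=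
  Ideal.span (X '' (cset l n))

lemma LX_zero (r : ℕ) : LX K l 0 r = Ideal.span (X '' (cset l r)) := by
  simp [LX, gens]

lemma LX_mono {j j' r r' : ℕ} (h : j ≤ j') (h' : r ≤ r') : LX K l j r ≤ LX K l j' r' := by
  apply Ideal.span_mono
  rintro p (⟨i, hi, rfl⟩ | ⟨v, ⟨hv, hv'⟩, rfl⟩)
  · exact Or.inl ⟨i, by omega, rfl⟩
  · exact Or.inr ⟨v, ⟨hv, by omega⟩, rfl⟩

lemma x_mem_LX (j r : ℕ) (k : Fin n) (hk : k.val < r) : X (l, k) ∈ LX K l j r :=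
  Ideal.subset_span (Or.inr ⟨(l, k), ⟨rfl, hk⟩, rfl⟩)

lemma x_mem_XX (k : Fin n) : X (l, k) ∈ XX K l :=
  Ideal.subset_span ⟨(l, k), ⟨rfl, k.2⟩, rfl⟩

lemma ff_mem_LX (j r : ℕ) (k : Fin n) (hk : k.val < j) : ff K l k ∈ LX K l j r :=
  Ideal.subset_span (Or.inl ⟨k, hk, rfl⟩)

lemma ff_mem_XX (i : Fin n) : ff K l i ∈ XX K l :=
  Ideal.sum_mem _ fun k _ => Ideal.mul_mem_right _ _ (x_mem_XX K l k)

lemma LX_le_XX (j r : ℕ) : LX K l j r ≤ XX K l := by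
  rw [LX, Ideal.span_le]
  rintro p (⟨i, hi, rfl⟩ | ⟨⟨v, w⟩, ⟨hv, hv'⟩, rfl⟩)
  · exact ff_mem_XX K l i
  · obtain rfl : v = l := hv
    exact x_mem_XX K v w

lemma LX_succ_left (i : Fin n) (r : ℕ) :
    LX K l (i.val + 1) r = Ideal.span {ff K l i} ⊔ LX K l i.val r := by
  apply le_antisymm
  · rw [LX, Ideal.span_le]
    rintro p (⟨i', hi, rfl⟩ | ⟨⟨v, w⟩, ⟨hv, hv'⟩, rfl⟩)
    · rcases Nat.lt_succ_iff_lt_or_eq.1 hi with h | h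
      · exact Ideal.mem_sup_right (ff_mem_LX K l _ _ _ h)
      · rw [Fin.ext h]
        exact Ideal.mem_sup_left (Ideal.mem_span_singleton_self _)
    · obtain rfl : v = l := hv
      exact Ideal.mem_sup_right (x_mem_LX K v _ _ _ hv')
  · rw [sup_le_iff]
    constructor
    · rw [Ideal.span_singleton_le_iff_mem]
      exact ff_mem_LX K l _ _ _ (by omega)
    · exact LX_mono K l (by omega) le_rfl

lemma LX_succ_right (j : ℕ) (k : Fin n) :
    LX K l j (k.val + 1) = Ideal.span {X (l, k)} ⊔ LX K l j k.val := by
  apply le_antisymm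
  · rw [LX, Ideal.span_le]
    rintro p (⟨i', hi, rfl⟩ | ⟨⟨v, w⟩, ⟨hv, hv'⟩, rfl⟩)
    · exact Ideal.mem_sup_right (ff_mem_LX K l _ _ _ hi)
    · obtain rfl : v = l := hv
      rcases Nat.lt_succ_iff_lt_or_eq.1 hv' with h | h
      · exact Ideal.mem_sup_right (x_mem_LX K v _ _ _ h)
      · obtain rfl : w = k := Fin.ext h
        exact Ideal.mem_sup_left (Ideal.mem_span_singleton_self _)
  · rw [sup_le_iff]
    constructor
    · rw [Ideal.span_singleton_le_iff_mem]
      exact x_mem_LX K l _ _ _ (by omega)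
    · exact LX_mono K l le_rfl (by omega)

/-- `ff i` is a nonzerodivisor on `Y / LX` if some `x_q` is. -/
lemma ff_nzd (i q : Fin n) (hi : i ≠ l) (r : ℕ) (t : Set (MvPolynomial (Fin n × Fin n) K))
    (ht : ∀ p ∈ t, p ∈ (inc K (i, q)).range)
    (h : ∀ b ∈ Ideal.span t, X (l, q) * b ∈ LX K l i.val r → b ∈ LX K l i.val r)
    (b : MvPolynomial (Fin n × Fin n) K) (hb : b ∈ Ideal.span t)
    (hb' : ff K l i * b ∈ LX K l i.val r) : b ∈ LX K l i.val r := by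
  have hx : ∀ k, (X (l, k) : MvPolynomial (Fin n × Fin n) K) ∈ (inc K (i, q)).range := fun k =>
    X_mem_inc K (fun h => hi (Prod.ext_iff.1 h).1.symm)
  refine mv_step K (i, q) (gens K l i.val r) t ?_ ht (X (l, q))
    (∑ k ∈ Finset.univ.erase q, X (l, k) * X (i, k)) (hx q) ?_ h b hb ?_
  · rintro p (⟨i', hi', rfl⟩ | ⟨⟨v, w⟩, ⟨hv, hv'⟩, rfl⟩)
    · refine Subalgebra.sum_mem _ fun k _ => Subalgebra.mul_mem _ (hx k) (X_mem_inc K ?_)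
      intro h
      have h1 : i' = i := (Prod.ext_iff.1 h).1
      rw [h1] at hi'
      exact lt_irrefl _ hi'
    · obtain rfl : v = l := hv
      exact hx w
  · refine Subalgebra.sum_mem _ fun k hk => Subalgebra.mul_mem _ (hx k) (X_mem_inc K ?_)
    intro h
    exact Finset.ne_of_mem_erase hk (Prod.ext_iff.1 h).2
  · rw [Finset.add_sum_erase _ (fun k => (X (l, k) * X (i, k) : MvPolynomial (Fin n × Fin n) K))
      (Finset.mem_univ q)]
    exact hb'

/-- common swap argument -/
lemma swap_arg (i k : Fin n) (a : MvPolynomial (Fin n × Fin n) K)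
    (hA : ∀ a, X (l, k) * a ∈ LX K l i.val k.val → a ∈ LX K l i.val k.val)
    (ha : X (l, k) * a ∈ LX K l (i.val + 1) k.val)
    (hf : ∀ b, X (l, k) * a - ff K l i * b ∈ LX K l i.val k.val →
      ff K l i * b ∈ LX K l i.val (k.val + 1) → b ∈ LX K l i.val (k.val + 1)) :
    a ∈ LX K l (i.val + 1) k.val := by
  rw [LX_succ_left] at ha
  obtain ⟨u, hu, e, he, hue⟩ := Submodule.mem_sup.1 ha
  obtain ⟨b, rfl⟩ := Ideal.mem_span_singleton'.1 hu
  have h1 : X (l, k) * a - ff K l i * b ∈ LX K l i.val k.val := by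
    rw [← hue]
    have : b * ff K l i + e - ff K l i * b = e := by ring
    rwa [this]
  have h2 : ff K l i * b ∈ LX K l i.val (k.val + 1) := by
    have h3 := LX_mono K l (le_refl i.val) (Nat.le_succ k.val) h1
    have h4 : X (l, k) * a ∈ LX K l i.val (k.val + 1) :=
      Ideal.mul_mem_right _ _ (x_mem_LX K l _ _ _ (Nat.lt_succ_self _))
    have := Ideal.sub_mem _ h4 h3
    rwa [sub_sub_cancel] at this
  have h3 := hf b h1 h2
  rw [LX_succ_right] at h3
  obtain ⟨u, hu, e', he', hue'⟩ := Submodule.mem_sup.1 h3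
  obtain ⟨c, rfl⟩ := Ideal.mem_span_singleton'.1 hu
  have h5 : X (l, k) * (a - ff K l i * c) ∈ LX K l i.val k.val := by
    have : X (l, k) * (a - ff K l i * c) = (X (l, k) * a - ff K l i * b) + ff K l i * e' := by
      rw [← hue']; ring
    rw [this]
    exact Ideal.add_mem _ h1 (Ideal.mul_mem_left _ _ he')
  have h6 := hA _ h5
  have : a = (a - ff K l i * c) + ff K l i * c := by ring
  rw [this]
  exact Ideal.add_mem _ (LX_mono K l (Nat.le_succ _) le_rfl h6)
    (Ideal.mul_mem_right _ _ (ff_mem_LX K l _ _ _ (Nat.lt_succ_self _)))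

lemma nzdA (hl : l.val + 1 = n) (j : ℕ) (hj : j ≤ l.val) : ∀ k : Fin n, k.val + j < n → ∀ a,
    X (l, k) * a ∈ LX K l j k.val → a ∈ LX K l j k.val := by
  induction j with
  | zero =>
    intro k hk a ha
    rw [LX_zero] at *
    exact X_nzd_span K _ _ (fun h => lt_irrefl _ h.2) a ha
  | succ j ih =>
    intro k hk a ha
    have ih := ih (by omega)
    let i : Fin n := ⟨j, by omega⟩
    refine swap_arg K l i k a (ih k (by omega)) ha ?_
    intro b _ hb
    let q : Fin n := ⟨k.val + 1, by omega⟩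
    have := ih q (by change k.val + 1 + j < n; omega)
    refine ff_nzd K l i q ?_ (k.val + 1) {1} ?_ ?_ b ?_ hb
    · intro h; rw [← h] at hj; simp [i] at hj
    · rintro p rfl; exact Subalgebra.one_mem _
    · exact fun b _ hb => this b hb
    · simp

/-- The auxiliary square matrix. -/
noncomputable def ZZ (j : ℕ) (r : Fin n) :
    Matrix (Fin n) (Fin n) (MvPolynomial (Fin n × Fin n) K) :=
  Matrix.of fun i k => if i.val ≤ j then X (i, k) else if k = i + r then 1 else 0

lemma eval_ZZ (j : ℕ) (hj : j < l.val) (r : Fin n) (z : Fin n → K) [NeZero n] :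
    MvPolynomial.aeval (fun v : Fin n × Fin n => if v.1 = l then z v.2 else
      if v.2 = v.1 + r then (1 : K) else 0) (ZZ K j r).det ≠ 0 := by
  rw [AlgHom.map_det]
  have : (AlgHom.mapMatrix (MvPolynomial.aeval (fun v : Fin n × Fin n => if v.1 = l then z v.2 else
      if v.2 = v.1 + r then (1 : K) else 0))) (ZZ K j r) =
      (Equiv.Perm.permMatrix K (Equiv.addRight r)) := by
    ext i k
    simp only [AlgHom.mapMatrix_apply, Matrix.map_apply, ZZ, Matrix.of_apply,
      Equiv.Perm.permMatrix, PEquiv.toMatrix_apply, Equiv.toPEquiv_apply, Equiv.coe_addRight,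
      Option.mem_some_iff]
    by_cases h : i.val ≤ j
    · have : i ≠ l := by rintro rfl; omega
      simp [h, this, eq_comm (a := i + r)]
    · simp only [h, if_false]
      by_cases h' : k = i + r
      · simp [h']
      · simp [h', Ne.symm h']
  rw [this, Matrix.det_permutation]
  rcases Int.units_eq_one_or (Equiv.Perm.sign (Equiv.addRight r)) with h | h <;> simp [h]

lemma ZZ_mul_adj (hl : l.val + 1 = n) (i : Fin n) (r : Fin n) (hr : r.val + i.val + 1 = n)
    (hi : i.val < l.val) :
    ∃ δ : Fin n → MvPolynomial (Fin n × Fin n) K, (∀ k, k.val < r.val → δ k = 0) ∧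
      (∀ i', i'.val < i.val → ∑ k, X (i', k) * δ k = 0) ∧
      (∀ k, δ k = (ZZ K i.val r).adjugate k i) ∧
      ∑ k, X (i, k) * δ k = (ZZ K i.val r).det := by
  have H : ∀ i', ∑ k, ZZ K i.val r i' k * (ZZ K i.val r).adjugate k i =
      if i' = i then (ZZ K i.val r).det else 0 := by
    intro i'
    have := congrFun (congrFun (Matrix.mul_adjugate (ZZ K i.val r)) i') i
    rw [Matrix.mul_apply] at this
    rw [this]
    simp [Matrix.one_apply]
  have : NeZero n := ⟨by omega⟩
  refine ⟨fun k => (ZZ K i.val r).adjugate k i, ?_, ?_, fun _ => rfl, ?_⟩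
  · intro k hk
    let i' : Fin n := ⟨k.val + i.val + 1, by omega⟩
    have h1 := H i'
    have h2 : i' ≠ i := by
      intro h
      have := congrArg Fin.val h
      simp [i'] at this
      omega
    have h3 : k = i' + r := by
      ext
      rw [Fin.val_add]
      have : i'.val + r.val = k.val + n := by change k.val + i.val + 1 + r.val = _; omega
      rw [this, Nat.add_mod_right, Nat.mod_eq_of_lt k.2]
    have h4 : ¬ (k.val + i.val + 1 ≤ i.val) := by omega
    rw [if_neg h2] at h1
    have h5 : ∀ k', ZZ K i.val r i' k' = if k' = k then 1 else 0 := by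
      intro k'
      rw [ZZ, Matrix.of_apply, if_neg h4, ← h3]
    simpa [h5] using h1
  · intro i' hi'
    have h1 := H i'
    rw [if_neg (by rintro rfl; exact lt_irrefl _ hi')] at h1
    have h5 : ∀ k', ZZ K i.val r i' k' = X (i', k') := by
      intro k'
      rw [ZZ, Matrix.of_apply, if_pos hi'.le]
    simpa only [h5] using h1
  · have h1 := H i
    rw [if_pos rfl] at h1
    simpa [ZZ] using h1

lemma kill_ZZ (j : ℕ) (hj : j < l.val) (r : Fin n) (a b : Fin n) :
    kill K (cset l n) (ZZ K j r a b) = ZZ K j r a b := by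
  simp only [ZZ, Matrix.of_apply]
  split_ifs with h h'
  · have : (a, b) ∉ cset l n := by
      rintro ⟨h, -⟩
      change a = l at h
      subst h
      omega
    simp [kill, this]
  · simp
  · simp

lemma det_not_mem (j : ℕ) (hj : j < l.val) (r : Fin n) : (ZZ K j r).det ∉ XX K l := by
  have : NeZero n := ⟨by have := l.2; omega⟩
  intro h
  refine eval_ZZ K l j hj r (fun _ => 0) ?_
  have : XX K l ≤ RingHom.ker (MvPolynomial.aeval (fun v : Fin n × Fin n =>
      if v.1 = l then (0 : K) else if v.2 = v.1 + r then (1 : K) else 0)) := by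
    rw [XX, Ideal.span_le]
    rintro _ ⟨⟨v, w⟩, ⟨hv, hv'⟩, rfl⟩
    obtain rfl : v = l := hv
    simp
  exact this h

/-- The quotient `b` lies in the ideal of the center variables. -/
lemma b_mem (hl : l.val + 1 = n) (i : Fin n) (r : Fin n) (hr : r.val + i.val + 1 = n)
    (hi : i.val < l.val) (a b : MvPolynomial (Fin n × Fin n) K) (ha : a ∈ XX K l)
    (h : X (l, r) * a - ff K l i * b ∈ LX K l i.val r.val) : b ∈ XX K l := by
  obtain ⟨δ, h1, h2, hδ, h3⟩ := ZZ_mul_adj K l hl i r hr hi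
  let T : MvPolynomial (Fin n × Fin n) K →ₐ[K] Polynomial (MvPolynomial (Fin n × Fin n) K) :=
    MvPolynomial.aeval fun v => if v.1 = l then Polynomial.C (δ v.2) * Polynomial.X
      else Polynomial.C (X v)
  have Tx : ∀ k, T (X (l, k)) = Polynomial.C (δ k) * Polynomial.X := fun k => by simp [T]
  have Ty : ∀ i k, i ≠ l → T (X (i, k)) = Polynomial.C (X (i, k)) := fun i k h => by simp [T, h]
  have Tf : ∀ i, i ≠ l → T (ff K l i) = Polynomial.C (∑ k, X (i, k) * δ k) * Polynomial.X := by
    intro i hi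
    simp only [ff, map_sum, map_mul, Tx, Ty _ _ hi, Finset.sum_mul]
    refine Finset.sum_congr rfl fun k _ => by ring
  have hker : LX K l i.val r.val ≤ RingHom.ker T := by
    rw [LX, Ideal.span_le]
    rintro p (⟨i', hi', rfl⟩ | ⟨⟨v, w⟩, ⟨hv, hv'⟩, rfl⟩)
    · change T _ = 0
      rw [Tf i' (by rintro rfl; omega), h2 i' hi']
      simp
    · obtain rfl : v = l := hv
      change T _ = 0
      rw [Tx, h1 w hv']
      simp
  have hX : XX K l ≤ (Ideal.span {(Polynomial.X : Polynomial (MvPolynomial (Fin n × Fin n) K))}).comap T := by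
    rw [XX, Ideal.span_le]
    rintro _ ⟨⟨v, w⟩, ⟨hv, hv'⟩, rfl⟩
    obtain rfl : v = l := hv
    rw [SetLike.mem_coe, Ideal.mem_comap]
    rw [Tx]
    exact Ideal.mul_mem_left _ _ (Ideal.mem_span_singleton_self _)
  obtain ⟨c, hc⟩ := Ideal.mem_span_singleton'.1 (hX ha)
  have e := hker h
  change T _ = 0 at e
  rw [map_sub, map_mul, map_mul, Tx, Tf i (by rintro rfl; omega), h3, ← RingHom.coe_coe, ← hc,
    RingHom.coe_coe, sub_eq_zero] at e
  have e2 : Polynomial.X * (Polynomial.C (δ r) * c) = Polynomial.C (ZZ K i.val r).det * T b := by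
    apply mul_left_cancel₀ (Polynomial.X_ne_zero (R := MvPolynomial (Fin n × Fin n) K))
    calc _ = Polynomial.C (δ r) * Polynomial.X * (c * Polynomial.X) := by ring
      _ = _ := by rw [e]; ring
  have e3 := congrArg (fun p => Polynomial.coeff p 0) e2
  simp only [Polynomial.mul_coeff_zero, Polynomial.coeff_X_zero, zero_mul,
    Polynomial.coeff_C_zero] at e3
  have hdet : (ZZ K i.val r).det ≠ 0 := by
    intro h0
    apply det_not_mem K l i.val hi r
    rw [h0]; exact Ideal.zero_mem _
  have e4 := (mul_eq_zero.1 e3.symm).resolve_left hdet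
  have e5 : (T b).coeff 0 = kill K (cset l n) b := by
    have : ((Polynomial.constantCoeff : Polynomial (MvPolynomial (Fin n × Fin n) K) →+* _).comp
        (T : MvPolynomial (Fin n × Fin n) K →+* Polynomial (MvPolynomial (Fin n × Fin n) K))) =
        (kill K (cset l n) : MvPolynomial (Fin n × Fin n) K →+* MvPolynomial (Fin n × Fin n) K) := by
      apply MvPolynomial.ringHom_ext
      · intro c
        have : T (C c) = Polynomial.C (C c) := T.commutes c
        have h' : kill K (cset l n) (C c) = C c := (kill K (cset l n)).commutes c
        simp [this, h']
      · rintro ⟨v, w⟩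
        by_cases h : v = l
        · subst h
          simp [Tx, kill, cset]
        · simp [Ty _ _ h, kill, cset, h]
    exact DFunLike.congr_fun this b
  rw [XX, mem_span_X_iff, ← e5, e4]

lemma nzdB' (hl : l.val + 1 = n) (j : ℕ) : ∀ i : Fin n, i.val = j → j < l.val →
    ∀ b ∈ XX K l, ff K l i * b ∈ LX K l j (n - j) → b ∈ LX K l j (n - j) := by
  induction j with
  | zero =>
    intro i hi _ b hb _
    rw [LX_zero]
    exact hb
  | succ j ih =>
    intro i hi hj b hb hfb
    let i' : Fin n := ⟨j, by omega⟩
    let r : Fin n := ⟨n - (j + 1), by omega⟩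
    have ih := ih i' rfl (by omega)
    have step : ∀ a ∈ XX K l, X (l, r) * a ∈ LX K l (j + 1) r.val → a ∈ LX K l (j + 1) r.val := by
      intro a ha ha'
      refine swap_arg K l i' r a (nzdA K l hl j (by omega) r (by simp [r]; omega)) ha' ?_
      intro b h1 h2
      have h3 : b ∈ XX K l := b_mem K l hl i' r (by simp [r, i']; omega) (by simp [i']; omega) a b ha h1
      have h4 : r.val + 1 = n - j := by simp [r]; omega
      rw [h4] at h2 ⊢
      exact ih b h3 h2
    rw [← hi] at hfb step ⊢
    rw [hi] at hfb ⊢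
    have h5 := ff_nzd K l i r (by rintro rfl; omega) r.val (X '' (cset l n)) (by
      rintro _ ⟨⟨v, w⟩, ⟨hv, hv'⟩, rfl⟩
      obtain rfl : v = l := hv
      refine X_mem_inc K ?_
      intro h
      have : v = i := (Prod.ext_iff.1 h).1
      rw [this] at hj; omega) step b hb
    rw [hi] at h5
    exact h5 hfb

lemma nzdB (hl : l.val + 1 = n) (j : ℕ) (r : Fin n) (hr : r.val + j + 1 = n) (hj : j < l.val) :
    ∀ a ∈ XX K l, X (l, r) * a ∈ LX K l (j + 1) r.val → a ∈ LX K l (j + 1) r.val := by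
  intro a ha ha'
  let i' : Fin n := ⟨j, by omega⟩
  refine swap_arg K l i' r a (nzdA K l hl j (by omega) r (by omega)) ha' ?_
  intro b h1 h2
  have h3 : b ∈ XX K l := b_mem K l hl i' r (by simp [i']; omega) hj a b ha h1
  have h4 : r.val + 1 = n - j := by omega
  rw [h4] at h2 ⊢
  exact nzdB' K l hl j i' rfl hj b h3 h2

end star

end LSSAux

namespace LSSAux

section frac
variable {R : Type} [CommRing R] [IsDomain R]
variable {F : Type} [Field F] [Algebra R F] [IsFractionRing R F]

/-- The localization `N⁻¹ R` as a subring of `F`. -/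
def Bloc (F : Type) [Field F] [Algebra R F] (N : Submonoid R) : Subring F where
  carrier := {z | ∃ s ∈ N, ∃ r : R, algebraMap R F s * z = algebraMap R F r}
  mul_mem' := by
    rintro a b ⟨s, hs, r, h⟩ ⟨s', hs', r', h'⟩
    refine ⟨s * s', N.mul_mem hs hs', r * r', ?_⟩
    rw [map_mul, map_mul, ← h, ← h']; ring
  one_mem' := ⟨1, N.one_mem, 1, by simp⟩
  add_mem' := by
    rintro a b ⟨s, hs, r, h⟩ ⟨s', hs', r', h'⟩
    refine ⟨s * s', N.mul_mem hs hs', s' * r + s * r', ?_⟩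
    rw [map_add, map_mul, map_mul, map_mul, ← h, ← h']; ring
  zero_mem' := ⟨1, N.one_mem, 0, by simp⟩
  neg_mem' := by
    rintro a ⟨s, hs, r, h⟩
    exact ⟨s, hs, -r, by rw [map_neg, ← h]; ring⟩

lemma mem_Bloc {N : Submonoid R} {z : F} :
    z ∈ Bloc F N ↔ ∃ s ∈ N, ∃ r : R, algebraMap R F s * z = algebraMap R F r := Iff.rfl

lemma alg_mem_Bloc (N : Submonoid R) (r : R) : algebraMap R F r ∈ Bloc F N :=
  ⟨1, N.one_mem, r, by simp⟩

lemma inv_mem_Bloc {N : Submonoid R} (hN : N ≤ R⁰) {s : R} (hs : s ∈ N) :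
    (algebraMap R F s)⁻¹ ∈ Bloc F N :=
  ⟨s, hs, 1, by
    rw [map_one, mul_inv_cancel₀]
    exact IsFractionRing.to_map_ne_zero_of_mem_nonZeroDivisors (hN hs)⟩

/-- `d` generates the divisorial hull of `J` over `B`. -/
def Has (B : Subring F) (J : FractionalIdeal R⁰ F) (d : F) : Prop :=
  d ≠ 0 ∧ ∀ z : F, (∀ j ∈ J, z * j ∈ B) ↔ z * d ∈ B

lemma Has.mul {B : Subring F} {J J' : FractionalIdeal R⁰ F} {d d' : F}
    (hR : ∀ r : R, algebraMap R F r ∈ B)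
    (h : Has B J d) (h' : Has B J' d') : Has B (J * J') (d * d') := by
  refine ⟨mul_ne_zero h.1 h'.1, fun z => ?_⟩
  have e1 : (∀ j ∈ J * J', z * j ∈ B) ↔ ∀ j' ∈ J', ∀ j ∈ J, (z * j') * j ∈ B := by
    constructor
    · intro H j' hj' j hj
      have := H (j * j') (FractionalIdeal.mul_mem_mul hj hj')
      convert this using 1; ring
    · intro H j hj
      refine FractionalIdeal.mul_induction_on hj ?_ ?_
      · intro i hi j hj
        have := H j hj i hi
        convert this using 1; ring
      · intro x y hx hy
        rw [mul_add]; exact B.add_mem hx hy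
  rw [e1]
  have e2 : (∀ j' ∈ J', ∀ j ∈ J, (z * j') * j ∈ B) ↔ ∀ j' ∈ J', (z * d) * j' ∈ B := by
    refine forall₂_congr fun j' hj' => ?_
    rw [h.2]
    rw [show z * j' * d = z * d * j' by ring]
  rw [e2, h'.2, mul_assoc]

lemma Has.one {B : Subring F} (hR : ∀ r : R, algebraMap R F r ∈ B) :
    Has B (1 : FractionalIdeal R⁰ F) 1 := by
  refine ⟨one_ne_zero, fun z => ?_⟩
  rw [mul_one]
  constructor
  · intro h
    simpa using h 1 (FractionalIdeal.one_mem_one R⁰)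
  · intro h j hj
    obtain ⟨r, rfl⟩ := (FractionalIdeal.mem_one_iff R⁰).1 hj
    exact B.mul_mem h (hR r)

lemma Has.pow {B : Subring F} {J : FractionalIdeal R⁰ F} {d : F}
    (hR : ∀ r : R, algebraMap R F r ∈ B) (h : Has B J d) (k : ℕ) : Has B (J ^ k) (d ^ k) := by
  induction k with
  | zero => simpa using Has.one hR
  | succ k ih => rw [pow_succ, pow_succ]; exact ih.mul hR h

lemma Has.span {B : Subring F} (hR : ∀ r : R, algebraMap R F r ∈ B) {a : F} (ha : a ≠ 0) :
    Has B (FractionalIdeal.spanSingleton R⁰ a) a := by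
  refine ⟨ha, fun z => ?_⟩
  constructor
  · intro h
    exact h a (FractionalIdeal.mem_spanSingleton_self R⁰ a)
  · intro h j hj
    obtain ⟨r, rfl⟩ := (FractionalIdeal.mem_spanSingleton R⁰).1 hj
    rw [Algebra.smul_def, mul_left_comm]
    exact B.mul_mem (hR r) h

lemma Has.unique {B : Subring F} {J : FractionalIdeal R⁰ F} {d d' : F}
    (h : Has B J d) (h' : Has B J d') : d * d'⁻¹ ∈ B := by
  rw [mul_comm, ← h.2, h'.2, inv_mul_cancel₀ h'.1]
  exact B.one_mem

lemma Has.ne_zero {B : Subring F} (hB : ∃ z, z ∉ B) {J : FractionalIdeal R⁰ F} {d : F}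
    (h : Has B J d) : J ≠ 0 := by
  rintro rfl
  obtain ⟨z, hz⟩ := hB
  apply hz
  have := (h.2 (z * d⁻¹)).1 (by
    intro j hj
    rw [FractionalIdeal.mem_zero_iff] at hj
    rw [hj, mul_zero]; exact B.zero_mem)
  rwa [mul_assoc, inv_mul_cancel₀ h.1, mul_one] at this

lemma mem_one_div {J : FractionalIdeal R⁰ F} (hJ : J ≠ 0) {z : F} :
    z ∈ 1 / J ↔ ∀ j ∈ J, ∃ r : R, algebraMap R F r = z * j := by
  rw [FractionalIdeal.mem_div_iff_of_ne_zero hJ]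
  simp only [FractionalIdeal.mem_one_iff]

/-- finitely many membership conditions have a common denominator -/
lemma exists_denom {N : Submonoid R} {J : FractionalIdeal R⁰ F}
    (hJ : (J : Submodule R F).FG) (z : F) (h : ∀ j ∈ J, z * j ∈ Bloc F N) :
    ∃ s ∈ N, ∀ j ∈ J, ∃ r : R, algebraMap R F r = (algebraMap R F s * z) * j := by
  classical
  obtain ⟨G, hG⟩ := hJ
  have h1 : ∀ G' : Finset F, G' ⊆ G → ∃ s ∈ N, ∀ j ∈ G', ∃ r : R,
      algebraMap R F r = (algebraMap R F s * z) * j := by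
    intro G'
    induction G' using Finset.induction_on with
    | empty => exact fun _ => ⟨1, N.one_mem, by simp⟩
    | insert a G' ha ih =>
      intro hs
      obtain ⟨s, hs1, hs2⟩ := ih (fun x hx => hs (Finset.mem_insert_of_mem hx))
      have haJ : a ∈ J := by
        rw [← FractionalIdeal.mem_coe, ← hG]
        exact Submodule.subset_span (hs (Finset.mem_insert_self _ _))
      obtain ⟨t, ht, r, hr⟩ := h a haJ
      refine ⟨s * t, N.mul_mem hs1 ht, ?_⟩
      intro j hj
      rcases Finset.mem_insert.1 hj with rfl | hj
      · exact ⟨s * r, by rw [map_mul, map_mul, ← hr]; ring⟩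
      · obtain ⟨r', hr'⟩ := hs2 j hj
        exact ⟨t * r', by rw [map_mul, map_mul, hr']; ring⟩
  obtain ⟨s, hs, h2⟩ := h1 G subset_rfl
  refine ⟨s, hs, ?_⟩
  intro j hj
  rw [← FractionalIdeal.mem_coe, ← hG] at hj
  induction hj using Submodule.span_induction with
  | mem x hx => exact h2 x hx
  | zero => exact ⟨0, by simp⟩
  | add x y _ _ hx hy =>
    obtain ⟨r, hr⟩ := hx
    obtain ⟨r', hr'⟩ := hy
    exact ⟨r + r', by rw [map_add, hr, hr']; ring⟩
  | smul a x _ hx =>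
    obtain ⟨r, hr⟩ := hx
    exact ⟨a * r, by rw [map_mul, hr, Algebra.smul_def]; ring⟩

lemma Has.inv {N : Submonoid R} (hN : N ≤ R⁰) {J : FractionalIdeal R⁰ F} (hJ : J ≠ 0)
    (hfg : (J : Submodule R F).FG) {d : F} (h : Has (Bloc F N) J d) :
    Has (Bloc F N) (1 / J) d⁻¹ := by
  refine ⟨inv_ne_zero h.1, fun z => ?_⟩
  constructor
  · intro hz
    have h1 := (h.2 d⁻¹).2 (by rw [inv_mul_cancel₀ h.1]; exact Subring.one_mem _)
    obtain ⟨s, hs, h2⟩ := exists_denom hfg _ h1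
    have h3 := hz _ ((mem_one_div hJ).2 h2)
    have h4 := (Bloc F N).mul_mem (inv_mem_Bloc hN hs) h3
    have hs0 : algebraMap R F s ≠ 0 :=
      IsFractionRing.to_map_ne_zero_of_mem_nonZeroDivisors (hN hs)
    convert h4 using 1
    field_simp
  · intro hz w hw
    have h1 : w * d ∈ Bloc F N := by
      rw [← h.2]
      intro j hj
      obtain ⟨r, hr⟩ := (mem_one_div hJ).1 hw j hj
      rw [← hr]; exact alg_mem_Bloc N r
    have := (Bloc F N).mul_mem hz h1
    have hd := h.1
    convert this using 1
    field_simp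

lemma one_div_ne_zero' {J : FractionalIdeal R⁰ F} (hJ : J ≠ 0) (hfg : (J : Submodule R F).FG) :
    1 / J ≠ 0 := by
  obtain ⟨s, hs, h2⟩ := exists_denom (N := R⁰) hfg 1 (by
    intro j hj
    obtain ⟨⟨r, s⟩, h⟩ := IsLocalization.surj R⁰ j
    exact ⟨s, s.2, r, by rw [one_mul, mul_comm]; exact h⟩)
  intro h0
  have := (mem_one_div hJ).2 h2
  rw [h0, FractionalIdeal.mem_zero_iff, mul_one] at this
  exact IsFractionRing.to_map_ne_zero_of_mem_nonZeroDivisors hs this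

variable [IsNoetherianRing R]

lemma fg (J : FractionalIdeal R⁰ F) : (J : Submodule R F).FG :=
  ((isNoetherian_submodule.1 (FractionalIdeal.isNoetherian J)) _ le_rfl)

lemma Has.closure {N : Submonoid R} (hN : N ≤ R⁰) {J : FractionalIdeal R⁰ F} (hJ : J ≠ 0)
    {d : F} (h : Has (Bloc F N) J d) : Has (Bloc F N) (divisorialClosure R F J) d := by
  have := (h.inv hN hJ (fg J)).inv hN (one_div_ne_zero' hJ (fg J)) (fg _)
  rwa [inv_inv] at this

/-- Equality of divisorial closures from local data. -/
lemma closure_eq {ι : Type*} (N : ι → Submonoid R)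
    (hloc : ∀ z : F, (∀ i, z ∈ Bloc F (N i)) → ∃ r : R, algebraMap R F r = z)
    {J J' : FractionalIdeal R⁰ F} (hJ : J ≠ 0) (hJ' : J' ≠ 0) {d d' : ι → F}
    (h : ∀ i, Has (Bloc F (N i)) J (d i)) (h' : ∀ i, Has (Bloc F (N i)) J' (d' i))
    (hd : ∀ i, d i * (d' i)⁻¹ ∈ Bloc F (N i)) (hd' : ∀ i, d' i * (d i)⁻¹ ∈ Bloc F (N i)) :
    divisorialClosure R F J = divisorialClosure R F J' := by
  have key : ∀ (J : FractionalIdeal R⁰ F) (hJ : J ≠ 0) (d : ι → F)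
      (h : ∀ i, Has (Bloc F (N i)) J (d i)) (z : F),
      z ∈ 1 / J ↔ ∀ i, z * d i ∈ Bloc F (N i) := by
    intro J hJ d h z
    rw [mem_one_div hJ]
    constructor
    · intro H i
      rw [← (h i).2]
      intro j hj
      obtain ⟨r, hr⟩ := H j hj
      rw [← hr]; exact alg_mem_Bloc _ r
    · intro H j hj
      exact hloc _ fun i => ((h i).2 z).2 (H i) j hj
  have : 1 / J = 1 / J' := by
    ext z
    rw [key J hJ d h, key J' hJ' d' h']
    refine forall_congr' fun i => ⟨fun H => ?_, fun H => ?_⟩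
    · have := Subring.mul_mem _ H (hd' i)
      have h0 := (h i).1
      convert this using 1
      field_simp
    · have := Subring.mul_mem _ H (hd i)
      have h0 := (h' i).1
      convert this using 1
      field_simp
  rw [divisorialClosure, divisorialClosure, this]

/-- Normality from local data. -/
lemma normal_of_has {ι : Type*} (N : ι → Submonoid R)
    (hloc : ∀ z : F, (∀ i, z ∈ Bloc F (N i)) → ∃ r : R, algebraMap R F r = z)
    (hex : ∀ i, ∀ J : FractionalIdeal R⁰ F, J ≠ 0 → ∃ d, Has (Bloc F (N i)) J d) :
    IsIntegrallyClosed R := by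
  rw [isIntegrallyClosed_iff F]
  intro z hz
  refine hloc z fun i => ?_
  set J := FractionalIdeal.adjoinIntegral R⁰ z hz with hJdef
  have h1 : (1 : F) ∈ J := (Algebra.adjoin R {z}).one_mem
  have hJ : J ≠ 0 := by
    intro h0
    rw [h0, FractionalIdeal.mem_zero_iff] at h1
    exact one_ne_zero h1
  have hJJ : J * J = J := by
    apply FractionalIdeal.coeToSubmodule_injective
    simp only [FractionalIdeal.coe_mul, hJdef, FractionalIdeal.adjoinIntegral_coe]
    rw [(Algebra.adjoin R {z}).isIdempotentElem_toSubmodule]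
  obtain ⟨d, hd⟩ := hex i J hJ
  have h2 := hd.mul (alg_mem_Bloc _) hd
  rw [hJJ] at h2
  have h3 := h2.unique hd
  rw [mul_assoc, mul_inv_cancel₀ hd.1, mul_one] at h3
  have h4 := (hd.2 1).2 (by rwa [one_mul]) z (FractionalIdeal.mem_adjoinIntegral_self R⁰ z hz)
  rwa [one_mul] at h4

lemma exists_gcd {P : Type*} [CommRing P] [IsDomain P] [UniqueFactorizationMonoid P]
    (G : Finset P) : ∃ g : P, (∀ x ∈ G, g ∣ x) ∧ ∀ t c : P, (∀ x ∈ G, t ∣ c * x) → t ∣ c * g := by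
  classical
  letI : GCDMonoid P := UniqueFactorizationMonoid.toGCDMonoid P
  induction G using Finset.induction_on with
  | empty => exact ⟨0, by simp, by simp⟩
  | insert a G ha ih =>
    obtain ⟨g, h1, h2⟩ := ih
    refine ⟨gcd a g, ?_, ?_⟩
    · intro x hx
      rcases Finset.mem_insert.1 hx with rfl | hx
      · exact gcd_dvd_left _ _
      · exact (gcd_dvd_right _ _).trans (h1 x hx)
    · intro t c h
      have h3 := h a (Finset.mem_insert_self _ _)
      have h4 := h2 t c fun x hx => h x (Finset.mem_insert_of_mem hx)
      exact (dvd_gcd h3 h4).trans (gcd_mul_left' c a g).dvd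

lemma exists_has {P : Type*} [CommRing P] [IsDomain P] [UniqueFactorizationMonoid P]
    (φ : P →+* F) (hinj : Function.Injective φ)
    (hfrac : ∀ z : F, ∃ p q : P, q ≠ 0 ∧ φ q * z = φ p)
    (M : Submonoid P) (hM : ∀ m ∈ M, m ≠ 0) (B : Subring F)
    (hR : ∀ r : R, algebraMap R F r ∈ B)
    (hB : ∀ z, z ∈ B ↔ ∃ m ∈ M, ∃ p, φ m * z = φ p)
    (J : FractionalIdeal R⁰ F) (hJ : J ≠ 0) : ∃ d, Has B J d := by
  classical
  have hφ : ∀ p, p ≠ 0 → φ p ≠ 0 := fun p hp => (map_ne_zero_iff φ hinj).2 hp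
  obtain ⟨G, hG⟩ := fg J
  have h1 : ∀ G' : Finset F, ∃ s : P, s ≠ 0 ∧ ∀ x ∈ G', ∃ p, φ s * x = φ p := by
    intro G'
    induction G' using Finset.induction_on with
    | empty => exact ⟨1, one_ne_zero, by simp⟩
    | insert a G' ha ih =>
      obtain ⟨s, hs, h⟩ := ih
      obtain ⟨p, q, hq, hpq⟩ := hfrac a
      refine ⟨s * q, mul_ne_zero hs hq, ?_⟩
      intro x hx
      rcases Finset.mem_insert.1 hx with rfl | hx
      · exact ⟨s * p, by rw [map_mul, map_mul, ← hpq]; ring⟩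
      · obtain ⟨p', hp'⟩ := h x hx
        exact ⟨q * p', by rw [map_mul, map_mul, ← hp']; ring⟩
  obtain ⟨s, hs, h2⟩ := h1 G
  choose! p hp using h2
  obtain ⟨g, hg1, hg2⟩ := exists_gcd (G.image p)
  have hs' := hφ s hs
  have hg : g ≠ 0 := by
    rintro rfl
    apply hJ
    apply FractionalIdeal.coeToSubmodule_injective
    change (J : Submodule R F) = ((0 : FractionalIdeal R⁰ F) : Submodule R F)
    rw [← hG, FractionalIdeal.coe_zero, Submodule.span_eq_bot]
    intro x hx
    have := hg1 (p x) (Finset.mem_image_of_mem p hx)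
    rw [zero_dvd_iff] at this
    have h3 := hp x hx
    rw [this, map_zero] at h3
    exact (mul_eq_zero.1 h3).resolve_left hs'
  have hg' := hφ g hg
  refine ⟨φ g / φ s, div_ne_zero hg' hs', fun z => ?_⟩
  constructor
  · intro h
    have h3 : ∀ G' : Finset F, G' ⊆ G → ∃ m ∈ M, ∀ x ∈ G', ∃ r, φ m * (z * x) = φ r := by
      intro G'
      induction G' using Finset.induction_on with
      | empty => exact fun _ => ⟨1, M.one_mem, by simp⟩
      | insert a G' ha ih =>
        intro hs
        obtain ⟨m, hm, hm2⟩ := ih (fun x hx => hs (Finset.mem_insert_of_mem hx))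
        have haJ : a ∈ J := by
          rw [← FractionalIdeal.mem_coe, ← hG]
          exact Submodule.subset_span (hs (Finset.mem_insert_self _ _))
        obtain ⟨t, ht, r, hr⟩ := (hB _).1 (h a haJ)
        refine ⟨m * t, M.mul_mem hm ht, ?_⟩
        intro j hj
        rcases Finset.mem_insert.1 hj with rfl | hj
        · exact ⟨m * r, by rw [map_mul, map_mul, ← hr]; ring⟩
        · obtain ⟨r', hr'⟩ := hm2 j hj
          exact ⟨t * r', by rw [map_mul, map_mul, ← hr']; ring⟩
    obtain ⟨m, hm, h4⟩ := h3 G subset_rfl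
    obtain ⟨a, b, hb, hab⟩ := hfrac z
    have h5 : b * s ∣ (m * a) * g := by
      apply hg2
      intro y hy
      obtain ⟨x, hx, rfl⟩ := Finset.mem_image.1 hy
      obtain ⟨r, hr⟩ := h4 x hx
      refine ⟨r, hinj ?_⟩
      simp only [map_mul]
      rw [← hr, ← hab, ← hp x hx]
      ring
    obtain ⟨c, hc⟩ := h5
    rw [hB]
    refine ⟨m, hm, c, ?_⟩
    have hc' := congrArg φ hc
    simp only [map_mul] at hc'
    rw [← hab] at hc'
    have hb' := hφ b hb
    have : φ b * (φ m * z * φ g) = φ b * (φ s * φ c) := by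
      calc _ = φ m * (φ b * z) * φ g := by ring
        _ = _ := by rw [hc']; ring
    have := mul_left_cancel₀ hb' this
    field_simp
    rw [mul_comm (φ s), ← mul_comm (φ s), ← this]
  · intro h j hj
    rw [← FractionalIdeal.mem_coe, ← hG] at hj
    induction hj using Submodule.span_induction with
    | mem x hx =>
      obtain ⟨c, hc⟩ := hg1 (p x) (Finset.mem_image_of_mem p hx)
      have hcB : φ c ∈ B := (hB _).2 ⟨1, M.one_mem, c, by simp⟩
      have := B.mul_mem h hcB
      have h3 := hp x hx
      rw [hc, map_mul] at h3
      convert this using 1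
      field_simp
      linear_combination z * h3
    | zero => rw [mul_zero]; exact B.zero_mem
    | add x y _ _ hx hy => rw [mul_add]; exact B.add_mem hx hy
    | smul a x _ hx =>
      rw [Algebra.smul_def, mul_left_comm]
      exact B.mul_mem (hR a) hx

end frac
end LSSAux

namespace LSSAux

section abs
variable {R : Type} [CommRing R] [IsDomain R] [IsNoetherianRing R]
variable {F : Type} [Field F] [Algebra R F] [IsFractionRing R F]

lemma Bloc_mono {N N' : Submonoid R} (h : N ≤ N') : Bloc F N ≤ Bloc F N' := by
  rintro z ⟨s, hs, r, e⟩
  exact ⟨s, h hs, r, e⟩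

lemma Has.mono {N N' : Submonoid R} (h : N ≤ N') (hN : N' ≤ R⁰) {J : FractionalIdeal R⁰ F}
    {d : F} (hd : Has (Bloc F N) J d) : Has (Bloc F N') J d := by
  refine ⟨hd.1, fun z => ?_⟩
  constructor
  · intro H
    obtain ⟨s, hs, h2⟩ := exists_denom (fg J) z H
    have h3 := (hd.2 (algebraMap R F s * z)).1 (by
      intro j hj
      obtain ⟨r, hr⟩ := h2 j hj
      rw [← hr]; exact alg_mem_Bloc _ r)
    have h4 := (Bloc F N').mul_mem (inv_mem_Bloc hN hs) (Bloc_mono h h3)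
    have hs0 : algebraMap R F s ≠ 0 :=
      IsFractionRing.to_map_ne_zero_of_mem_nonZeroDivisors (hN hs)
    convert h4 using 1
    field_simp
  · rintro ⟨s, hs, r, e⟩ j hj
    have h3 := (hd.2 (algebraMap R F s * z)).2 (by
      rw [mul_assoc, e]; exact alg_mem_Bloc _ r) j hj
    have h4 := (Bloc F N').mul_mem (inv_mem_Bloc hN hs) (Bloc_mono h h3)
    have hs0 : algebraMap R F s ≠ 0 :=
      IsFractionRing.to_map_ne_zero_of_mem_nonZeroDivisors (hN hs)
    convert h4 using 1
    field_simp

lemma has_divZPow {N : Submonoid R} (hN : N ≤ R⁰) {I : FractionalIdeal R⁰ F} (hI : I ≠ 0)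
    (hI1 : ∀ k : ℕ, I ^ k ≠ 0) (hI2 : ∀ k : ℕ, (1 / I) ^ k ≠ 0)
    {e : F} (he : Has (Bloc F N) I e) (m : ℤ) : Has (Bloc F N) (divZPow R F I m) (e ^ m) := by
  rw [divZPow]
  split_ifs with h
  · have := (he.pow (alg_mem_Bloc N) m.toNat).closure hN (hI1 _)
    rw [← zpow_natCast, Int.toNat_of_nonneg h] at this
    exact this
  · have := ((he.inv hN hI (fg I)).pow (alg_mem_Bloc N) (-m).toNat).closure hN (hI2 _)
    rw [← zpow_natCast, Int.toNat_of_nonneg (by omega), inv_zpow', neg_neg] at this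
    exact this

/-- All the data about the ring that is needed. -/
structure Data (R : Type) [CommRing R] (P0 P1 : Type) [CommRing P0] [CommRing P1] where
  (x0 x1 : R)
  (Q : Ideal R)
  (hQ : Q.IsPrime)
  (X0 X1 : P0)
  (Y1 : P1)
  (ψ0 : P0 →+* R)
  (ψ1 : P1 →+* R)
  (inj0 : Function.Injective ψ0)
  (inj1 : Function.Injective ψ1)
  (e0 : ψ0 X0 = x0)
  (e1 : ψ0 X1 = x1)
  (f1 : ψ1 Y1 = x1)
  (pX0 : Prime X0)
  (pX1 : Prime X1)
  (surj0 : ∀ r, ∃ (N : ℕ) (p : P0), x0 ^ N * r = ψ0 p)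
  (surj1 : ∀ r, ∃ (N : ℕ) (p : P1), x1 ^ N * r = ψ1 p)
  (hx0 : x0 ∈ Q)
  (hx1 : x1 ∈ Q)
  (w : R)
  (hw : w ∉ Q)
  (hwQ : ∀ a ∈ Q, ∃ b, w * a = x0 * b)
  (key : ∀ a ∈ Q, x0 ∣ x1 * a → x0 ∣ a)
  (nd01 : ∀ N, ¬ x0 ∣ x1 ^ N)
  (nd10 : ∀ N, ¬ x1 ∣ x0 ^ N)

section data
variable {P0 P1 : Type} [CommRing P0] [CommRing P1] (D : Data R P0 P1)

lemma Data.x0_ne : D.x0 ≠ 0 := by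
  intro h
  have := D.e0
  rw [h, ← map_zero D.ψ0] at this
  exact D.pX0.ne_zero (D.inj0 this)

lemma Data.x1_ne : D.x1 ≠ 0 := by
  intro h
  have := D.e1
  rw [h, ← map_zero D.ψ0] at this
  exact D.pX1.ne_zero (D.inj0 this)

/-- the three submonoids -/
def Data.N : Fin 3 → Submonoid R := ![Submonoid.powers D.x0, Submonoid.powers D.x1,
  haveI := D.hQ; D.Q.primeCompl]

lemma Data.hN (i : Fin 3) : D.N i ≤ R⁰ := by
  match i with
  | 0 => exact powers_le_nonZeroDivisors_of_noZeroDivisors D.x0_ne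
  | 1 => exact powers_le_nonZeroDivisors_of_noZeroDivisors D.x1_ne
  | 2 => haveI := D.hQ; exact Ideal.primeCompl_le_nonZeroDivisors _

lemma Data.hloc (z : F) (h : ∀ i, z ∈ Bloc F (D.N i)) : ∃ r : R, algebraMap R F r = z := by
  have inj := IsFractionRing.injective R F
  obtain ⟨_, ⟨N, rfl⟩, a, ha⟩ := h 0
  obtain ⟨_, ⟨M, rfl⟩, b, hb⟩ := h 1
  obtain ⟨s, hs, c, hc⟩ := h 2
  have hs : s ∉ D.Q := hs
  have hx0 := D.x0_ne
  have hx0' : algebraMap R F D.x0 ≠ 0 := (map_ne_zero_iff _ inj).2 hx0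
  simp only at ha hb
  induction N generalizing a with
  | zero => exact ⟨a, by rw [← ha]; simp⟩
  | succ N ih =>
    have h1 : s * a = D.x0 ^ (N + 1) * c := inj (by
      rw [map_mul, map_mul, ← ha, ← hc]; ring)
    have h2 : a ∈ D.Q := by
      have : s * a ∈ D.Q := by
        rw [h1, pow_succ, mul_assoc]
        exact D.Q.mul_mem_left _ (D.Q.mul_mem_right _ D.hx0)
      exact (D.hQ.mem_or_mem this).resolve_left hs
    have h3 : D.x0 ∣ D.x1 ^ M * a := ⟨D.x0 ^ N * b, inj (by
      simp only [map_mul, map_pow, ← ha, ← hb]; ring)⟩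
    have h4 : D.x0 ∣ a := by
      clear hb
      induction M with
      | zero => simpa using h3
      | succ M ihM =>
        apply ihM
        apply D.key _ (D.Q.mul_mem_left _ h2)
        convert h3 using 1; ring
    obtain ⟨a', rfl⟩ := h4
    refine ih a' ?_
    rw [map_mul, map_pow, pow_succ] at ha
    rw [map_pow]
    apply mul_left_cancel₀ hx0'
    rw [← ha]; ring

/-- the map from the local ring to the fraction field -/
noncomputable def Data.φ [hQ : D.Q.IsPrime] : Localization.AtPrime D.Q →+* F :=
  IsLocalization.lift (M := D.Q.primeCompl) (g := algebraMap R F) (fun y =>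
    (IsFractionRing.to_map_ne_zero_of_mem_nonZeroDivisors
      (Ideal.primeCompl_le_nonZeroDivisors _ y.2)).isUnit)

lemma Data.φ_alg [hQ : D.Q.IsPrime] (r : R) :
    D.φ (F := F) (algebraMap R _ r) = algebraMap R F r := by
  simp [Data.φ]

lemma Data.φ_inj [hQ : D.Q.IsPrime] : Function.Injective (D.φ (F := F)) := by
  rw [injective_iff_map_eq_zero]
  intro a ha
  obtain ⟨⟨r, s⟩, h⟩ := IsLocalization.surj D.Q.primeCompl a
  have := congrArg (D.φ (F := F)) h
  rw [map_mul, ha, zero_mul, φ_alg] at this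
  have h0 : r = 0 := (map_eq_zero_iff _ (IsFractionRing.injective R F)).1 this.symm
  rw [h0, map_zero] at h
  exact (IsUnit.mul_left_eq_zero (IsLocalization.map_units _ s)).1 h

lemma Data.mem_B2 [hQ : D.Q.IsPrime] (z : F) : z ∈ Bloc F (D.N 2) ↔ ∃ p, z = D.φ (F := F) p := by
  constructor
  · rintro ⟨s, hs, r, h⟩
    refine ⟨IsLocalization.mk' _ r (⟨s, hs⟩ : D.Q.primeCompl), ?_⟩
    have hs0 : algebraMap R F s ≠ 0 :=
      IsFractionRing.to_map_ne_zero_of_mem_nonZeroDivisors (D.hN 2 hs)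
    apply mul_left_cancel₀ hs0
    rw [h, ← D.φ_alg s, ← map_mul, ← D.φ_alg r]
    congr 1
    exact (IsLocalization.mk'_spec' (Localization.AtPrime D.Q) r (⟨s, hs⟩ : D.Q.primeCompl)).symm
  · rintro ⟨p, rfl⟩
    obtain ⟨⟨r, s⟩, h⟩ := IsLocalization.surj D.Q.primeCompl p
    refine ⟨s, s.2, r, ?_⟩
    rw [← D.φ_alg r, ← D.φ_alg s.1, ← map_mul, ← h, mul_comm]

lemma Data.maxid [hQ : D.Q.IsPrime] : IsLocalRing.maximalIdeal (Localization.AtPrime D.Q) =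
    Ideal.span {algebraMap R _ D.x0} := by
  rw [← Localization.AtPrime.map_eq_maximalIdeal]
  apply le_antisymm
  · rw [Ideal.map_le_iff_le_comap]
    intro a ha
    obtain ⟨b, hb⟩ := D.hwQ a ha
    have hu : IsUnit (algebraMap R (Localization.AtPrime D.Q) D.w) :=
      IsLocalization.map_units _ (⟨D.w, D.hw⟩ : D.Q.primeCompl)
    rw [Ideal.mem_comap, ← Ideal.unit_mul_mem_iff_mem _ hu, ← map_mul, hb, map_mul]
    exact Ideal.mul_mem_right _ _ (Ideal.mem_span_singleton_self _)
  · rw [Ideal.span_singleton_le_iff_mem]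
    exact Ideal.mem_map_of_mem _ D.hx0

lemma Data.pid [hQ : D.Q.IsPrime] : IsPrincipalIdealRing (Localization.AtPrime D.Q) := by
  have : (IsLocalRing.maximalIdeal (Localization.AtPrime D.Q)).IsPrincipal := ⟨_, D.maxid⟩
  exact ((tfae_of_isNoetherianRing_of_isLocalRing_of_isDomain
    (Localization.AtPrime D.Q)).out 0 4).2 this

lemma Data.fac2 (z : F) (hz : z ≠ 0) : ∃ k : ℤ, z * ((algebraMap R F D.x0) ^ k)⁻¹ ∈ Bloc F (D.N 2) ∧
    (algebraMap R F D.x0) ^ k * z⁻¹ ∈ Bloc F (D.N 2) := by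
  haveI := D.hQ
  have inj := IsFractionRing.injective R F
  have hx0' : algebraMap R F D.x0 ≠ 0 := (map_ne_zero_iff _ inj).2 D.x0_ne
  have h1 : ∀ r : R, r ≠ 0 → ∃ k : ℕ,
      algebraMap R F r * ((algebraMap R F D.x0) ^ k)⁻¹ ∈ Bloc F (D.N 2) ∧
      (algebraMap R F D.x0) ^ k * (algebraMap R F r)⁻¹ ∈ Bloc F (D.N 2) := by
    intro r hr
    have hr' : algebraMap R F r ≠ 0 := (map_ne_zero_iff _ inj).2 hr
    have hp : (IsLocalRing.maximalIdeal (Localization.AtPrime D.Q)).IsPrincipal := ⟨_, D.maxid⟩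
    obtain ⟨k, hk⟩ := exists_maximalIdeal_pow_eq_of_principal _ hp
      (Ideal.span {algebraMap R (Localization.AtPrime D.Q) r}) (by
        rw [Ne, Ideal.span_singleton_eq_bot]
        intro h0
        have := D.φ_alg (F := F) r
        rw [h0, map_zero] at this
        exact hr' this.symm)
    rw [D.maxid, Ideal.span_singleton_pow] at hk
    refine ⟨k, ?_, ?_⟩
    · have := Ideal.span_singleton_le_span_singleton.1 hk.le
      obtain ⟨c, hc⟩ := this
      refine (D.mem_B2 _).2 ⟨c, ?_⟩
      have := congrArg (D.φ (F := F)) hc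
      rw [map_mul, map_pow, D.φ_alg, D.φ_alg] at this
      rw [this]
      field_simp
    · have := Ideal.span_singleton_le_span_singleton.1 hk.ge
      obtain ⟨c, hc⟩ := this
      refine (D.mem_B2 _).2 ⟨c, ?_⟩
      have := congrArg (D.φ (F := F)) hc
      rw [map_mul, map_pow, D.φ_alg, D.φ_alg] at this
      rw [this]
      field_simp
  obtain ⟨⟨a, s⟩, h⟩ := IsLocalization.surj R⁰ z
  simp only at h
  have hs : (s : R) ≠ 0 := nonZeroDivisors.ne_zero s.2
  have hs' : algebraMap R F s ≠ 0 := (map_ne_zero_iff _ inj).2 hs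
  have ha' : algebraMap R F a ≠ 0 := by rw [← h]; exact mul_ne_zero hz hs'
  have ha : a ≠ 0 := (map_ne_zero_iff _ inj).1 ha'
  obtain ⟨k, hk1, hk2⟩ := h1 a ha
  obtain ⟨m, hm1, hm2⟩ := h1 s hs
  have hz' : z = algebraMap R F a * (algebraMap R F s)⁻¹ := by
    rw [← h]; field_simp
  refine ⟨k - m, ?_, ?_⟩
  · convert (Bloc F (D.N 2)).mul_mem hk1 hm2 using 1
    rw [hz', zpow_sub₀ hx0', zpow_natCast, zpow_natCast]
    field_simp
  · convert (Bloc F (D.N 2)).mul_mem hk2 hm1 using 1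
    rw [hz', zpow_sub₀ hx0', zpow_natCast, zpow_natCast]
    field_simp

lemma Data.zpow_mem (k : ℤ) (h : (algebraMap R F D.x0) ^ k ∈ Bloc F (D.N 2)) : 0 ≤ k := by
  by_contra hk
  obtain ⟨m, rfl⟩ : ∃ m : ℕ, k = -((m : ℤ) + 1) := ⟨(-k - 1).toNat, by omega⟩
  obtain ⟨s, hs, r, e⟩ := h
  have inj := IsFractionRing.injective R F
  have hx0' : algebraMap R F D.x0 ≠ 0 := (map_ne_zero_iff _ inj).2 D.x0_ne
  have hs : s ∉ D.Q := hs
  apply hs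
  have : s = D.x0 ^ (m + 1) * r := inj (by
    rw [map_mul, ← e, map_pow, zpow_neg, ← Nat.cast_succ, zpow_natCast]
    field_simp)
  rw [this, pow_succ, mul_assoc]
  exact D.Q.mul_mem_left _ (D.Q.mul_mem_right _ D.hx0)

lemma Data.hex [IsDomain P0] [UniqueFactorizationMonoid P0] [IsDomain P1]
    [UniqueFactorizationMonoid P1] (i : Fin 3) (J : FractionalIdeal R⁰ F) (hJ : J ≠ 0) :
    ∃ d, Has (Bloc F (D.N i)) J d := by
  have inj := IsFractionRing.injective R F
  have gen : ∀ (P : Type) [CommRing P] [IsDomain P] [UniqueFactorizationMonoid P]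
      (ψ : P →+* R) (hψ : Function.Injective ψ) (x : R) (hx : x ≠ 0) (X : P) (hX : ψ X = x)
      (surj : ∀ r, ∃ (N : ℕ) (p : P), x ^ N * r = ψ p),
      ∃ d, Has (Bloc F (Submonoid.powers x)) J d := by
    intro P _ _ _ ψ hψ x hx X hX surj
    have hx' : algebraMap R F x ≠ 0 := (map_ne_zero_iff _ inj).2 hx
    refine exists_has ((algebraMap R F).comp ψ) (inj.comp hψ) ?_ (Submonoid.powers X) ?_ _
      (alg_mem_Bloc _) ?_ J hJ
    · intro z
      obtain ⟨⟨a, s⟩, h⟩ := IsLocalization.surj R⁰ z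
      obtain ⟨N, p, hp⟩ := surj a
      obtain ⟨M, q, hq⟩ := surj s
      have hs : (s : R) ≠ 0 := nonZeroDivisors.ne_zero s.2
      refine ⟨X ^ M * p, X ^ N * q, ?_, ?_⟩
      · intro h0
        have := congrArg ψ h0
        rw [map_mul, map_pow, hX, ← hq, map_zero] at this
        exact mul_ne_zero (pow_ne_zero _ hx) (mul_ne_zero (pow_ne_zero _ hx) hs) this
      · simp only [RingHom.comp_apply, map_mul, map_pow, hX, ← hp, ← hq]
        simp only at h
        rw [← h]; ring
    · rintro _ ⟨k, rfl⟩ h0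
      have := congrArg ψ h0
      simp only [map_pow, hX, map_zero] at this
      exact pow_ne_zero _ hx this
    · intro z
      constructor
      · rintro ⟨_, ⟨N, rfl⟩, r, e⟩
        obtain ⟨M, p, hp⟩ := surj r
        refine ⟨X ^ (N + M), ⟨_, rfl⟩, p, ?_⟩
        simp only [RingHom.comp_apply, ← hp, map_mul, ← e, map_pow, hX]
        ring
      · rintro ⟨_, ⟨N, rfl⟩, p, e⟩
        refine ⟨_, ⟨N, rfl⟩, ψ p, ?_⟩
        simpa [hX] using e
  match i with
  | 0 => exact gen P0 D.ψ0 D.inj0 D.x0 D.x0_ne D.X0 D.e0 D.surj0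
  | 1 => exact gen P1 D.ψ1 D.inj1 D.x1 D.x1_ne D.Y1 D.f1 D.surj1
  | 2 =>
    haveI := D.hQ
    haveI := D.pid
    refine exists_has (D.φ (F := F)) D.φ_inj ?_ ⊥ ?_ _ (alg_mem_Bloc _) ?_ J hJ
    · intro z
      obtain ⟨⟨a, s⟩, h⟩ := IsLocalization.surj R⁰ z
      have hs : (s : R) ≠ 0 := nonZeroDivisors.ne_zero s.2
      refine ⟨algebraMap R _ a, algebraMap R _ s, ?_, ?_⟩
      · intro h0
        have := D.φ_alg (F := F) s
        rw [h0, map_zero] at this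
        exact (map_ne_zero_iff _ inj).2 hs this.symm
      · rw [D.φ_alg, D.φ_alg, mul_comm]; exact h
    · intro m hm
      rw [Submonoid.mem_bot] at hm
      rw [hm]; exact one_ne_zero
    · intro z
      rw [D.mem_B2]
      simp [Submonoid.mem_bot]

end data
end abs
end LSSAux

namespace LSSAux

section abs4
variable {R : Type} [CommRing R] [IsDomain R] [IsNoetherianRing R]
variable {F : Type} [Field F] [Algebra R F] [IsFractionRing R F]
variable {P0 P1 : Type} [CommRing P0] [CommRing P1]

/-- the submonoid generated by the two elements -/
def Data.N12 (D : Data R P0 P1) : Submonoid R := Submonoid.powers D.x0 ⊔ Submonoid.powers D.x1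

lemma Data.hN12 (D : Data R P0 P1) : D.N12 ≤ R⁰ :=
  sup_le (D.hN 0) (D.hN 1)

lemma Data.unit12 (D : Data R P0 P1) [IsDomain P0] [UniqueFactorizationMonoid P0] (u : F) (hu0 : u ≠ 0)
    (hu : u ∈ Bloc F D.N12) (hu' : u⁻¹ ∈ Bloc F D.N12) :
    ∃ (c : Rˣ) (i j : ℤ), u = algebraMap R F c * (algebraMap R F D.x0) ^ i *
      (algebraMap R F D.x1) ^ j := by
  have inj := IsFractionRing.injective R F
  have hx0' : algebraMap R F D.x0 ≠ 0 := (map_ne_zero_iff _ inj).2 D.x0_ne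
  have hx1' : algebraMap R F D.x1 ≠ 0 := (map_ne_zero_iff _ inj).2 D.x1_ne
  have h1 : ∀ v ∈ Bloc F D.N12, ∃ (a b : ℕ) (p : P0),
      (algebraMap R F D.x0) ^ a * (algebraMap R F D.x1) ^ b * v = algebraMap R F (D.ψ0 p) := by
    rintro v ⟨s, hs, r, h⟩
    obtain ⟨_, ⟨a, rfl⟩, _, ⟨b, rfl⟩, rfl⟩ := Submonoid.mem_sup.1 hs
    obtain ⟨N, p, hp⟩ := D.surj0 r
    refine ⟨N + a, b, p, ?_⟩
    rw [← hp, map_mul, ← h, map_mul, map_pow, map_pow, map_pow]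
    ring
  obtain ⟨a, b, p, hp⟩ := h1 u hu
  obtain ⟨a', b', p', hp'⟩ := h1 _ hu'
  have h2 : D.X0 ^ (a + a') * D.X1 ^ (b + b') = p * p' := by
    apply D.inj0
    apply inj
    simp only [map_mul, map_pow, D.e0, D.e1, ← hp, ← hp']
    field_simp
    ring
  have h3 : p ∣ D.X0 ^ (a + a') * D.X1 ^ (b + b') := ⟨p', h2⟩
  obtain ⟨p1, p2, hp1, hp2, rfl⟩ := exists_dvd_and_dvd_of_dvd_mul h3
  obtain ⟨i, _, hi⟩ := (dvd_prime_pow D.pX0 _).1 hp1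
  obtain ⟨j, _, hj⟩ := (dvd_prime_pow D.pX1 _).1 hp2
  obtain ⟨c1, hc1⟩ := hi.symm
  obtain ⟨c2, hc2⟩ := hj.symm
  refine ⟨Units.map (D.ψ0 : P0 →* R) (c1 * c2), i - a, j - b, ?_⟩
  rw [← hc1, ← hc2] at hp
  simp only [map_mul, map_pow, D.e0, D.e1] at hp
  rw [zpow_sub₀ hx0', zpow_sub₀ hx1']
  simp only [zpow_natCast, map_mul, Units.val_mul, Units.coe_map, MonoidHom.coe_coe]
  field_simp
  rw [mul_right_comm, mul_comm u, ← mul_assoc] at *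
  linear_combination hp

lemma Data.unit_both (D : Data R P0 P1) [IsDomain P0] [UniqueFactorizationMonoid P0] (u : F) (hu0 : u ≠ 0)
    (h0 : u ∈ Bloc F (D.N 0)) (h0' : u⁻¹ ∈ Bloc F (D.N 0))
    (h1 : u ∈ Bloc F (D.N 1)) (h1' : u⁻¹ ∈ Bloc F (D.N 1)) :
    ∃ c : Rˣ, u = algebraMap R F c := by
  have inj := IsFractionRing.injective R F
  have hx0' : algebraMap R F D.x0 ≠ 0 := (map_ne_zero_iff _ inj).2 D.x0_ne
  have hx1' : algebraMap R F D.x1 ≠ 0 := (map_ne_zero_iff _ inj).2 D.x1_ne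
  have gen : ∀ (x y : R) (hx : x ≠ 0) (hy : y ≠ 0) (nd : ∀ N, ¬ x ∣ y ^ N) (v : F)
      (hv : v ∈ Bloc F (Submonoid.powers y)) (c : Rˣ) (i j : ℤ)
      (e : v = algebraMap R F c * (algebraMap R F x) ^ i * (algebraMap R F y) ^ j), 0 ≤ i := by
    intro x y hx hy nd v hv c i j e
    have hx' : algebraMap R F x ≠ 0 := (map_ne_zero_iff _ inj).2 hx
    have hy' : algebraMap R F y ≠ 0 := (map_ne_zero_iff _ inj).2 hy
    by_contra hi
    obtain ⟨m, rfl⟩ : ∃ m : ℕ, i = -((m : ℤ) + 1) := ⟨(-i - 1).toNat, by omega⟩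
    obtain ⟨_, ⟨N, rfl⟩, r, h⟩ := hv
    obtain ⟨A, B, rfl⟩ : ∃ A B : ℕ, j = (A : ℤ) - B := ⟨j.toNat, (-j).toNat, by omega⟩
    apply nd (N + A)
    have hc : algebraMap R F (c : R) * algebraMap R F ((c⁻¹ : Rˣ) : R) = 1 := by
      rw [← map_mul]; simp
    refine ⟨x ^ m * y ^ B * r * (c⁻¹ : Rˣ), inj ?_⟩
    simp only [map_mul, map_pow, ← h, e]
    rw [show -((m : ℤ) + 1) = -((m + 1 : ℕ) : ℤ) by push_cast; ring]
    rw [zpow_neg, zpow_natCast, zpow_sub₀ hy', zpow_natCast, zpow_natCast]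
    field_simp
    linear_combination (-algebraMap R F y ^ (N + A) * algebraMap R F x ^ (m + 1)) * hc
  obtain ⟨c, i, j, e⟩ := D.unit12 u hu0 (Bloc_mono le_sup_left h0) (Bloc_mono le_sup_left h0')
  have hc : algebraMap R F (c : R) * algebraMap R F ((c⁻¹ : Rˣ) : R) = 1 := by
    rw [← map_mul]; simp
  have e' : u⁻¹ = algebraMap R F ((c⁻¹ : Rˣ) : R) * (algebraMap R F D.x0) ^ (-i) *
      (algebraMap R F D.x1) ^ (-j) := by
    rw [e, mul_inv, mul_inv, zpow_neg, zpow_neg, eq_inv_of_mul_eq_one_right hc]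
  have i1 := gen _ _ D.x0_ne D.x1_ne D.nd01 u h1 c i j e
  have i2 := gen _ _ D.x0_ne D.x1_ne D.nd01 _ h1' _ _ _ e'
  have i3 := gen _ _ D.x1_ne D.x0_ne D.nd10 u h0 c j i (by rw [e]; ring)
  have i4 := gen _ _ D.x1_ne D.x0_ne D.nd10 _ h0' _ (-j) (-i) (by rw [e']; ring)
  obtain rfl : i = 0 := by omega
  obtain rfl : j = 0 := by omega
  exact ⟨c, by simpa using e⟩

/-- the local generators of `Q` -/
noncomputable def Data.gen (D : Data R P0 P1) (F : Type) [Field F] [Algebra R F] : Fin 3 → F :=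
  ![1, 1, algebraMap R F D.x0]

lemma Data.gen_has (D : Data R P0 P1) (i : Fin 3) :
    Has (Bloc F (D.N i)) (D.Q : FractionalIdeal R⁰ F) (D.gen F i) := by
  have inj := IsFractionRing.injective R F
  have hx0' : algebraMap R F D.x0 ≠ 0 := (map_ne_zero_iff _ inj).2 D.x0_ne
  have hx1' : algebraMap R F D.x1 ≠ 0 := (map_ne_zero_iff _ inj).2 D.x1_ne
  have gen : ∀ x ∈ D.Q, x ≠ 0 → Has (Bloc F (Submonoid.powers x))
      (D.Q : FractionalIdeal R⁰ F) 1 := by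
    intro x hx hx0
    have hx' : algebraMap R F x ≠ 0 := (map_ne_zero_iff _ inj).2 hx0
    refine ⟨one_ne_zero, fun z => ?_⟩
    rw [mul_one]
    constructor
    · intro h
      have := h _ ((FractionalIdeal.mem_coeIdeal R⁰).2 ⟨x, hx, rfl⟩)
      have h2 := (Bloc F (Submonoid.powers x)).mul_mem this (inv_mem_Bloc
        (powers_le_nonZeroDivisors_of_noZeroDivisors hx0) (Submonoid.mem_powers x))
      convert h2 using 1
      field_simp
    · intro h j hj
      obtain ⟨r, -, rfl⟩ := (FractionalIdeal.mem_coeIdeal R⁰).1 hj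
      exact Subring.mul_mem _ h (alg_mem_Bloc _ r)
  match i with
  | 0 => exact gen _ D.hx0 D.x0_ne
  | 1 => exact gen _ D.hx1 D.x1_ne
  | 2 =>
    refine ⟨hx0', fun z => ?_⟩
    constructor
    · intro h
      exact h _ ((FractionalIdeal.mem_coeIdeal R⁰).2 ⟨D.x0, D.hx0, rfl⟩)
    · intro h j hj
      obtain ⟨r, hr, rfl⟩ := (FractionalIdeal.mem_coeIdeal R⁰).1 hj
      obtain ⟨b, hb⟩ := D.hwQ r hr
      have hb' := congrArg (algebraMap R F) hb
      rw [map_mul, map_mul] at hb'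
      have hw : D.w ∈ D.N 2 := D.hw
      have hw' : algebraMap R F D.w ≠ 0 :=
        IsFractionRing.to_map_ne_zero_of_mem_nonZeroDivisors (D.hN 2 hw)
      have h2 := Subring.mul_mem _ (Subring.mul_mem _ h (alg_mem_Bloc _ b))
        (inv_mem_Bloc (F := F) (D.hN 2) hw)
      convert h2 using 1
      change _ = z * algebraMap R F D.x0 * _ * _
      field_simp
      linear_combination z * hb'

lemma Data.not_all (D : Data R P0 P1) : ∃ z : F, z ∉ Bloc F (D.N 2) := by
  refine ⟨(algebraMap R F D.x0) ^ (-1 : ℤ), fun h => ?_⟩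
  have := D.zpow_mem _ h
  omega

lemma Data.has_zpow (D : Data R P0 P1) (m : ℤ) (i : Fin 3) :
    Has (Bloc F (D.N i)) (divZPow R F (D.Q : FractionalIdeal R⁰ F) m) (D.gen F i ^ m) := by
  have h0 := (D.gen_has (F := F) 2).ne_zero D.not_all
  refine has_divZPow (D.hN i) h0 ?_ ?_ (D.gen_has i) m
  · intro k
    exact ((D.gen_has (F := F) 2).pow (alg_mem_Bloc _) k).ne_zero D.not_all
  · intro k
    exact (((D.gen_has (F := F) 2).inv (D.hN 2) h0 (fg _)).pow (alg_mem_Bloc _) k).ne_zero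
      D.not_all

theorem Data.normal (D : Data R P0 P1) [IsDomain P0] [UniqueFactorizationMonoid P0] [IsDomain P1]
    [UniqueFactorizationMonoid P1] : IsIntegrallyClosed R :=
  normal_of_has (F := FractionRing R) D.N D.hloc D.hex

theorem Data.free (D : Data R P0 P1) [IsDomain P0] [UniqueFactorizationMonoid P0] [IsDomain P1]
    [UniqueFactorizationMonoid P1] : DivisorClassGroupIsFreeOfRank R F 1 := by
  have inj := IsFractionRing.injective R F
  have hx0' : algebraMap R F D.x0 ≠ 0 := (map_ne_zero_iff _ inj).2 D.x0_ne
  have hx1' : algebraMap R F D.x1 ≠ 0 := (map_ne_zero_iff _ inj).2 D.x1_ne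
  have hne := fun m => (D.has_zpow (F := F) m 2).ne_zero D.not_all
  have powx : ∀ (x : R) (hx : x ≠ 0) (k : ℤ),
      algebraMap R F x ^ k ∈ Bloc F (Submonoid.powers x) := by
    intro x hx k
    obtain ⟨A, B, rfl⟩ : ∃ A B : ℕ, k = (A : ℤ) - B := ⟨k.toNat, (-k).toNat, by omega⟩
    have hx' : algebraMap R F x ≠ 0 := (map_ne_zero_iff _ inj).2 hx
    refine ⟨x ^ B, ⟨B, rfl⟩, x ^ A, ?_⟩
    rw [zpow_sub₀ hx', zpow_natCast, zpow_natCast, map_pow, map_pow]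
    field_simp
  refine ⟨fun _ => (D.Q : FractionalIdeal R⁰ F), fun _ =>
    (D.gen_has (F := F) 2).ne_zero D.not_all, ?_, ?_⟩
  · intro J hJ
    choose d hd using fun i => D.hex i J hJ
    have h0 := (hd 0).mono (N' := D.N12) le_sup_left D.hN12
    have h1 := (hd 1).mono (N' := D.N12) le_sup_right D.hN12
    have d0 := (hd 0).1
    have d1 := (hd 1).1
    have d2 := (hd 2).1
    obtain ⟨c, i, j, e⟩ := D.unit12 (d 0 * (d 1)⁻¹) (mul_ne_zero d0 (inv_ne_zero d1))
      (h0.unique h1) (by rw [mul_inv, inv_inv, mul_comm]; exact h1.unique h0)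
    have hc : algebraMap R F (c : R) * algebraMap R F ((c⁻¹ : Rˣ) : R) = 1 := by
      rw [← map_mul]; simp
    have hc0 := left_ne_zero_of_mul_eq_one hc
    set δ := d 1 * algebraMap R F D.x1 ^ j with hδ
    have hδ0 : δ ≠ 0 := mul_ne_zero d1 (zpow_ne_zero _ hx1')
    have e0 : d 0 = algebraMap R F c * algebraMap R F D.x0 ^ i * δ := by
      rw [hδ, ← mul_left_inj' (inv_ne_zero d1), e]
      field_simp
    obtain ⟨k, hk1, hk2⟩ := D.fac2 (δ⁻¹ * d 2) (mul_ne_zero (inv_ne_zero hδ0) d2)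
    refine ⟨fun _ => k, δ⁻¹, inv_ne_zero hδ0, ?_⟩
    rw [Fin.prod_univ_one]
    have H : ∀ i, Has (Bloc F (D.N i)) (FractionalIdeal.spanSingleton R⁰ δ⁻¹ * J) (δ⁻¹ * d i) :=
      fun i => (Has.span (alg_mem_Bloc _) (inv_ne_zero hδ0)).mul (alg_mem_Bloc _) (hd i)
    refine closure_eq D.N D.hloc (hne k) ((H 2).ne_zero D.not_all) (D.has_zpow k) H ?_ ?_
    · intro t
      match t with
      | 0 =>
        have := Subring.mul_mem _ (alg_mem_Bloc (F := F) (D.N 0) ((c⁻¹ : Rˣ) : R))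
          (powx D.x0 D.x0_ne (-i))
        convert this using 1
        change (1 : F) ^ k * _ = _
        rw [e0, one_zpow, zpow_neg, eq_inv_of_mul_eq_one_right hc]
        field_simp
      | 1 =>
        have : algebraMap R F D.x1 ^ j ∈ Bloc F (D.N 1) := powx D.x1 D.x1_ne j
        convert this using 1
        change (1 : F) ^ k * _ = _
        rw [hδ, one_zpow]
        field_simp
      | 2 => exact hk2
    · intro t
      match t with
      | 0 =>
        have := Subring.mul_mem _ (alg_mem_Bloc (F := F) (D.N 0) (c : R))
          (powx D.x0 D.x0_ne i)
        convert this using 1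
        change _ * ((1 : F) ^ k)⁻¹ = _
        rw [e0, one_zpow]
        field_simp
      | 1 =>
        have : algebraMap R F D.x1 ^ (-j) ∈ Bloc F (D.N 1) := powx D.x1 D.x1_ne (-j)
        convert this using 1
        change _ * ((1 : F) ^ k)⁻¹ = _
        rw [hδ, one_zpow, zpow_neg]
        field_simp
      | 2 => exact hk1
  · intro v w ⟨a, ha, h⟩
    rw [Fin.prod_univ_one, Fin.prod_univ_one] at h
    have H : ∀ i, Has (Bloc F (D.N i)) (FractionalIdeal.spanSingleton R⁰ a *
        divZPow R F (D.Q : FractionalIdeal R⁰ F) (w 0)) (a * D.gen F i ^ (w 0)) :=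
      fun i => (Has.span (alg_mem_Bloc _) ha).mul (alg_mem_Bloc _) (D.has_zpow (w 0) i)
    have H1 := fun i => (D.has_zpow (F := F) (v 0) i).closure (D.hN i) (hne _)
    have H2 := fun i => (H i).closure (D.hN i) ((H 2).ne_zero D.not_all)
    rw [← h] at H2
    have U := fun i => (H1 i).unique (H2 i)
    have V := fun i => (H2 i).unique (H1 i)
    have u0 := U 0
    have u1 := U 1
    have u2 := U 2
    have v0 := V 0
    have v1 := V 1
    have v2 := V 2
    simp only [Data.gen, Matrix.cons_val_zero, Matrix.cons_val_one, Matrix.cons_val,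
      one_zpow, mul_one, one_mul, inv_one] at u0 u1 u2 v0 v1 v2
    obtain ⟨c, rfl⟩ := D.unit_both a ha v0 u0 v1 u1
    have hc : algebraMap R F (c : R) * algebraMap R F ((c⁻¹ : Rˣ) : R) = 1 := by
      rw [← map_mul]; simp
    have w1 := Subring.mul_mem _ u2 (alg_mem_Bloc (F := F) (D.N 2) (c : R))
    have w2 := Subring.mul_mem _ v2 (alg_mem_Bloc (F := F) (D.N 2) ((c⁻¹ : Rˣ) : R))
    have z1 := D.zpow_mem (F := F) (v 0 - w 0) (by
      convert w1 using 1
      rw [zpow_sub₀ hx0']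
      field_simp)
    have z2 := D.zpow_mem (F := F) (w 0 - v 0) (by
      convert w2 using 1
      rw [zpow_sub₀ hx0', eq_inv_of_mul_eq_one_right hc]
      field_simp)
    funext i
    rw [Fin.fin_one_eq_zero i]
    omega

end abs4
end LSSAux

namespace LSSAux

section conc
variable (K : Type) [Field K] {n : ℕ} (l : Fin n)

/-- polynomial ring in all variables but the `q`-th column of the leaves -/
abbrev PP (q : Fin n) : Type := MvPolynomial {v : Fin n × Fin n // v.1 = l ∨ v.2 ≠ q} K

/-- the inclusion -/
noncomputable def ιι (q : Fin n) : PP K l q →ₐ[K] MvPolynomial (Fin n × Fin n) K :=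
  MvPolynomial.rename Subtype.val

/-- the center variables -/
noncomputable def xx (q k : Fin n) : PP K l q := X ⟨(l, k), Or.inl rfl⟩

/-- the part of `ff` not involving the column `q` -/
noncomputable def gg (q i : Fin n) : PP K l q :=
  ∑ k : Fin n, if h : k ≠ q then xx K l q k * X ⟨(i, k), Or.inr h⟩ else 0

/-- solving for the column `q` -/
noncomputable def θθ (q : Fin n) : MvPolynomial (Fin n × Fin n) K →ₐ[K] FractionRing (PP K l q) :=
  MvPolynomial.aeval fun v => if h : v.1 = l ∨ v.2 ≠ q then algebraMap _ _ (X ⟨v, h⟩ : PP K l q)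
    else - (algebraMap (PP K l q) _ (gg K l q v.1)) / algebraMap (PP K l q) _ (xx K l q q)

lemma ff_eq (q i : Fin n) : ff K l i = X (l, q) * X (i, q) + ιι K l q (gg K l q i) := by
  rw [ff, ← Finset.add_sum_erase _ _ (Finset.mem_univ q), gg, map_sum,
    ← Finset.add_sum_erase Finset.univ (fun k => ιι K l q _) (Finset.mem_univ q)]
  congr 1
  simp only [ne_eq, not_true_eq_false, dite_false, map_zero, zero_add]
  refine Finset.sum_congr rfl fun k hk => ?_
  rw [dif_pos (Finset.ne_of_mem_erase hk)]
  simp [ιι, xx]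

lemma θ_ι (q : Fin n) (p : PP K l q) : θθ K l q (ιι K l q p) = algebraMap _ _ p := by
  have : (θθ K l q).comp (ιι K l q) = 
      IsScalarTower.toAlgHom K (PP K l q) (FractionRing (PP K l q)) := by
    ext v
    simp [θθ, ιι, v.2]
  exact DFunLike.congr_fun this p

lemma ι_x (q k : Fin n) : ιι K l q (xx K l q k) = X (l, k) := by
  simp [ιι, xx]

lemma xx_ne (q k : Fin n) : xx K l q k ≠ 0 := X_ne_zero _

lemma θ_ff (q i : Fin n) (hi : i ≠ l) : θθ K l q (ff K l i) = 0 := by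
  rw [ff_eq K l q, map_add, θ_ι, map_mul, ← ι_x K l q q, θ_ι]
  have h0 : algebraMap (PP K l q) (FractionRing (PP K l q)) (xx K l q q) ≠ 0 :=
    (map_ne_zero_iff _ (IsFractionRing.injective _ _)).2 (xx_ne K l q q)
  have : θθ K l q (X (i, q)) = - (algebraMap (PP K l q) _ (gg K l q i)) /
      algebraMap (PP K l q) _ (xx K l q q) := by
    simp [θθ, hi]
  rw [this]
  field_simp
  ring

/-- the LSS ideal -/
noncomputable abbrev LL : Ideal (MvPolynomial (Fin n × Fin n) K) := LX K l l.val 0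

lemma le_ker {A : Type*} [CommRing A] (f : MvPolynomial (Fin n × Fin n) K →+* A)
    (hf : ∀ i, i ≠ l → f (ff K l i) = 0) (a) (ha : a ∈ LL K l) : f a = 0 := by
  have : LL K l ≤ RingHom.ker f := by
    rw [LL, LX, Ideal.span_le]
    rintro p (⟨i, hi, rfl⟩ | ⟨v, ⟨hv, hv'⟩, rfl⟩)
    · exact hf i (by rintro rfl; exact lt_irrefl _ hi)
    · exact absurd hv' (Nat.not_lt_zero _)
  exact this ha

lemma θ_LL (q : Fin n) (a) (ha : a ∈ LL K l) : θθ K l q a = 0 :=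
  le_ker K l (θθ K l q).toRingHom (fun i hi => θ_ff K l q i hi) a ha

/-- the structure map of the chart -/
noncomputable def ψψ (q : Fin n) : PP K l q →+* MvPolynomial (Fin n × Fin n) K ⧸ LL K l :=
  (Ideal.Quotient.mk (LL K l)).comp (ιι K l q : PP K l q →+* MvPolynomial (Fin n × Fin n) K)

lemma ψ_apply (q : Fin n) (p) : ψψ K l q p = Ideal.Quotient.mk (LL K l) (ιι K l q p) := rfl

lemma ψ_inj (q : Fin n) : Function.Injective (ψψ K l q) := by
  rw [injective_iff_map_eq_zero]
  intro p hp
  rw [ψ_apply, Ideal.Quotient.eq_zero_iff_mem] at hp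
  have := θ_LL K l q _ hp
  rw [θ_ι] at this
  exact (map_eq_zero_iff _ (IsFractionRing.injective _ _)).1 this

lemma ψ_surj (hl : l.val + 1 = n) (q : Fin n) (r : MvPolynomial (Fin n × Fin n) K ⧸ LL K l) :
    ∃ (N : ℕ) (p : PP K l q), (Ideal.Quotient.mk (LL K l) (X (l, q))) ^ N * r = ψψ K l q p := by
  obtain ⟨a, rfl⟩ := Ideal.Quotient.mk_surjective r
  have hx : Ideal.Quotient.mk (LL K l) (X (l, q)) = ψψ K l q (xx K l q q) := by
    rw [ψ_apply, ι_x]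
  induction a using MvPolynomial.induction_on with
  | C c => exact ⟨0, C c, by simp [ψ_apply, ιι]⟩
  | add a b ha hb =>
    obtain ⟨N, p, hp⟩ := ha
    obtain ⟨M, p', hp'⟩ := hb
    refine ⟨N + M, xx K l q q ^ M * p + xx K l q q ^ N * p', ?_⟩
    simp only [map_add, map_mul, map_pow, ← hp, ← hp', ← hx]
    ring
  | mul_X a v ha =>
    obtain ⟨N, p, hp⟩ := ha
    by_cases hv : v.1 = l ∨ v.2 ≠ q
    · refine ⟨N, p * X ⟨v, hv⟩, ?_⟩
      rw [map_mul, map_mul, ← hp, mul_assoc]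
      congr 2
      simp [ψ_apply, ιι]
    · push Not at hv
      obtain ⟨i, k⟩ := v
      obtain ⟨hi, hk⟩ := hv
      simp only at hi hk
      subst hk
      refine ⟨N + 1, p * - gg K l k i, ?_⟩
      have h1 : Ideal.Quotient.mk (LL K l) (X (l, k)) * Ideal.Quotient.mk (LL K l) (X (i, k))
          = ψψ K l k (- gg K l k i) := by
        rw [ψ_apply, map_neg, ← map_mul, Ideal.Quotient.eq, sub_neg_eq_add, ← ff_eq]
        refine ff_mem_LX K l _ _ _ ?_
        have := i.2
        have : i.val ≠ l.val := fun h => hi (Fin.ext h)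
        omega
      rw [map_mul, map_mul, ← hp, ← h1]
      ring

lemma LL_prime (hl : l.val + 1 = n) : (LL K l).IsPrime := by
  have hn : 0 < n := by omega
  let q : Fin n := ⟨0, hn⟩
  have : LL K l = RingHom.ker (θθ K l q) := by
    apply le_antisymm
    · intro a ha
      exact θ_LL K l q a ha
    · intro a ha
      have ha : θθ K l q a = 0 := ha
      obtain ⟨N, p, hp⟩ := ψ_surj K l hl q (Ideal.Quotient.mk _ a)
      rw [ψ_apply, ← map_pow, ← map_mul, Ideal.Quotient.eq] at hp
      have h1 := θ_LL K l q _ hp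
      rw [map_sub, map_mul, ha, mul_zero, zero_sub, neg_eq_zero, θ_ι] at h1
      have h2 : p = 0 := (map_eq_zero_iff _ (IsFractionRing.injective _ _)).1 h1
      rw [h2, map_zero, sub_zero] at hp
      clear h1 h2 ha
      induction N with
      | zero => simpa using hp
      | succ N ih =>
        apply ih
        refine nzdA K l hl l.val le_rfl q (by change 0 + l.val < n; omega) _ ?_
        change _ ∈ LL K l
        convert hp using 1; ring
  rw [this]
  exact RingHom.ker_isPrime _

/-- reduction modulo the center variables -/
noncomputable def κκ : MvPolynomial (Fin n × Fin n) K ⧸ LL K l →+* MvPolynomial (Fin n × Fin n) K :=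
  Ideal.Quotient.lift (LL K l) (kill K (cset l n) : _ →+* MvPolynomial (Fin n × Fin n) K)
    (le_ker K l _ (fun i _ => (mem_span_X_iff K _ _).1 (ff_mem_XX K l i)))

/-- the prime ideal of the center variables -/
noncomputable def QQ : Ideal (MvPolynomial (Fin n × Fin n) K ⧸ LL K l) := RingHom.ker (κκ K l)

lemma mem_QQ (a) : Ideal.Quotient.mk (LL K l) a ∈ QQ K l ↔ a ∈ XX K l :=
  (mem_span_X_iff K _ _).symm

lemma mem_J (hn : 0 < n) (a) : a ∈ LX K l l.val 1 ↔
    Ideal.Quotient.mk (LL K l) (X (l, ⟨0, hn⟩)) ∣ Ideal.Quotient.mk (LL K l) a := by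
  have := LX_succ_right K l l.val ⟨0, hn⟩
  simp only [zero_add] at this
  rw [this]
  constructor
  · intro h
    obtain ⟨b, hb, c, hc, rfl⟩ := Submodule.mem_sup.1 h
    obtain ⟨d, rfl⟩ := Ideal.mem_span_singleton.1 hb
    refine ⟨Ideal.Quotient.mk _ d, ?_⟩
    rw [map_add, map_mul, Ideal.Quotient.eq_zero_iff_mem.2 hc, add_zero]
  · rintro ⟨d, hd⟩
    obtain ⟨d, rfl⟩ := Ideal.Quotient.mk_surjective d
    rw [← map_mul, Ideal.Quotient.eq] at hd
    have := Ideal.add_mem _ (Ideal.mem_sup_right (S := Ideal.span {X (l, (⟨0, hn⟩ : Fin n))}) hd)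
      (Ideal.mem_sup_left (Ideal.mul_mem_right d _ (Ideal.mem_span_singleton_self _)))
    simpa using this

lemma det_mul_mem (hl : l.val + 1 = n) (h1n : 1 < n) (a) (ha : a ∈ XX K l) :
    (ZZ K (l.val - 1) ⟨1, h1n⟩).det * a ∈ LX K l l.val 1 := by
  set Z := ZZ K (l.val - 1) ⟨1, h1n⟩ with hZ
  have hx : ∀ k, Z.det * X (l, k) ∈ LX K l l.val 1 := by
    intro k
    have h1 : (Z.adjugate * Z).mulVec (fun k => X (l, k)) k = Z.det * X (l, k) := by
      rw [Matrix.adjugate_mul, Matrix.smul_mulVec, Matrix.one_mulVec]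
      simp
    rw [← h1, ← Matrix.mulVec_mulVec, Matrix.mulVec, dotProduct]
    refine Ideal.sum_mem _ fun i _ => Ideal.mul_mem_left _ _ ?_
    rw [Matrix.mulVec, dotProduct]
    by_cases hi : i = l
    · subst hi
      have e : i + (⟨1, h1n⟩ : Fin n) = ⟨0, by omega⟩ := by
        ext
        rw [Fin.val_add]
        simp [hl]
      have h2 : ∀ k, Z i k = if k = ⟨0, by omega⟩ then 1 else 0 := by
        intro k
        rw [hZ, ZZ, Matrix.of_apply, if_neg (by omega), e]
      simp only [h2, ite_mul, one_mul, zero_mul, Finset.sum_ite_eq', Finset.mem_univ, if_true]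
      exact x_mem_LX K i _ _ _ (by simp)
    · have hi' : i.val < l.val := by
        have := i.2
        have : i.val ≠ l.val := fun h => hi (Fin.ext h)
        omega
      have : ∑ k, Z i k * X (l, k) = ff K l i := by
        rw [ff]
        refine Finset.sum_congr rfl fun k _ => ?_
        rw [hZ, ZZ, Matrix.of_apply, if_pos (by omega), mul_comm]
      rw [this]
      exact ff_mem_LX K l _ _ _ hi'
  induction ha using Submodule.span_induction with
  | mem x h =>
    obtain ⟨⟨v, k⟩, ⟨hv, -⟩, rfl⟩ := h
    obtain rfl : v = l := hv
    exact hx k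
  | zero => rw [mul_zero]; exact Ideal.zero_mem _
  | add x y _ _ hx hy => rw [mul_add]; exact Ideal.add_mem _ hx hy
  | smul a x _ hx => rw [smul_eq_mul, mul_left_comm]; exact Ideal.mul_mem_left _ _ hx

lemma not_dvd (p q : Fin n) (hpq : p ≠ q) (N : ℕ) : ¬ Ideal.Quotient.mk (LL K l) (X (l, p)) ∣
    (Ideal.Quotient.mk (LL K l) (X (l, q))) ^ N := by
  classical
  intro h
  let χ : MvPolynomial (Fin n × Fin n) K →+* K :=
    (MvPolynomial.aeval (fun v : Fin n × Fin n => if v = (l, q) then (1 : K) else 0) :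
      MvPolynomial (Fin n × Fin n) K →ₐ[K] K)
  have hχ : ∀ a ∈ LL K l, χ a = 0 := by
    refine le_ker K l χ fun i hi => ?_
    simp [χ, ff, hi]
  have h2 := map_dvd (Ideal.Quotient.lift (LL K l) χ hχ) h
  rw [map_pow, Ideal.Quotient.lift_mk, Ideal.Quotient.lift_mk] at h2
  simp [χ, hpq] at h2

/-- the data for the star graph -/
noncomputable def theData (hl : l.val + 1 = n) (h0 : 0 < n) (h1 : 1 < n) :
    Data (MvPolynomial (Fin n × Fin n) K ⧸ LL K l) (PP K l ⟨0, h0⟩) (PP K l ⟨1, h1⟩) where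
  x0 := Ideal.Quotient.mk _ (X (l, ⟨0, h0⟩))
  x1 := Ideal.Quotient.mk _ (X (l, ⟨1, h1⟩))
  Q := QQ K l
  hQ := RingHom.ker_isPrime _
  X0 := xx K l _ _
  X1 := xx K l _ ⟨1, h1⟩
  Y1 := xx K l _ _
  ψ0 := ψψ K l _
  ψ1 := ψψ K l _
  inj0 := ψ_inj K l _
  inj1 := ψ_inj K l _
  e0 := by rw [ψ_apply, ι_x]
  e1 := by rw [ψ_apply, ι_x]
  f1 := by rw [ψ_apply, ι_x]
  pX0 := MvPolynomial.X_prime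
  pX1 := MvPolynomial.X_prime
  surj0 := ψ_surj K l hl _
  surj1 := ψ_surj K l hl _
  hx0 := (mem_QQ K l _).2 (x_mem_XX K l _)
  hx1 := (mem_QQ K l _).2 (x_mem_XX K l _)
  w := Ideal.Quotient.mk _ (ZZ K (l.val - 1) ⟨1, h1⟩).det
  hw := fun h => det_not_mem K l (l.val - 1) (by omega) ⟨1, h1⟩ ((mem_QQ K l _).1 h)
  hwQ := by
    intro a ha
    obtain ⟨a, rfl⟩ := Ideal.Quotient.mk_surjective a
    rw [mem_QQ] at ha
    rw [← map_mul]
    exact (mem_J K l h0 _).1 (det_mul_mem K l hl h1 a ha)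
  key := by
    intro a ha h
    obtain ⟨a, rfl⟩ := Ideal.Quotient.mk_surjective a
    rw [mem_QQ] at ha
    rw [← map_mul, ← mem_J] at h
    rw [← mem_J]
    have := nzdB K l hl (l.val - 1) ⟨1, h1⟩ (by change 1 + (l.val - 1) + 1 = n; omega) (by omega)
      a ha
    rw [Nat.sub_add_cancel (by omega)] at this
    exact this h
  nd01 := not_dvd K l _ _ (by simp)
  nd10 := not_dvd K l _ _ (by simp)

lemma lss_eq (hn : 2 ≤ n) : lssIdeal K (starGraph n hn) n = LL K (⟨n - 1, by omega⟩ : Fin n) := by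
  set l : Fin n := ⟨n - 1, by omega⟩ with hl
  apply le_antisymm
  · rw [lssIdeal, Ideal.span_le]
    rintro _ ⟨i, j, h, rfl⟩
    rw [starGraph, SimpleGraph.fromRel_adj] at h
    have key : ∀ i : Fin n, i ≠ l → ff K l i ∈ LL K l := by
      intro i hi
      refine ff_mem_LX K l _ _ _ ?_
      have := i.2
      have : i.val ≠ l.val := fun h => hi (Fin.ext h)
      have : l.val = n - 1 := rfl
      omega
    obtain ⟨hij, rfl | rfl⟩ := h
    · exact key j (Ne.symm hij)
    · have := key i hij
      rw [ff] at this
      simp only [mul_comm] at this ⊢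
      exact this
  · rw [LL, LX, Ideal.span_le]
    rintro p (⟨i, hi, rfl⟩ | ⟨v, ⟨hv, hv'⟩, rfl⟩)
    · refine Ideal.subset_span ⟨l, i, ?_, rfl⟩
      rw [starGraph, SimpleGraph.fromRel_adj]
      exact ⟨by rintro rfl; exact lt_irrefl _ hi, Or.inl rfl⟩
    · exact absurd hv' (Nat.not_lt_zero _)

end conc
end LSSAux

/-- For the `(n-1)`-star graph `G` and `d = n`, the LSS ring `R_G(n)` is a normal
Noetherian domain whose divisor class group is isomorphic to `ℤ`. -/
theorem lss_star_classGroup (K : Type) [Field K] (n : ℕ) (hn : 2 ≤ n) :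
    ∃ _ : IsDomain (MvPolynomial (Fin n × Fin n) K ⧸ lssIdeal K (starGraph n hn) n),
      IsIntegrallyClosed (MvPolynomial (Fin n × Fin n) K ⧸ lssIdeal K (starGraph n hn) n) ∧
      IsNoetherianRing (MvPolynomial (Fin n × Fin n) K ⧸ lssIdeal K (starGraph n hn) n) ∧
      DivisorClassGroupIsFreeOfRank
        (MvPolynomial (Fin n × Fin n) K ⧸ lssIdeal K (starGraph n hn) n)
        (FractionRing (MvPolynomial (Fin n × Fin n) K ⧸ lssIdeal K (starGraph n hn) n)) 1 := by
  rw [LSSAux.lss_eq K hn]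
  have hl : (⟨n - 1, by omega⟩ : Fin n).val + 1 = n := by
    change n - 1 + 1 = n
    omega
  have hP := LSSAux.LL_prime K (⟨n - 1, by omega⟩ : Fin n) hl
  have hD : IsDomain (MvPolynomial (Fin n × Fin n) K ⧸ LSSAux.LL K (⟨n - 1, by omega⟩ : Fin n)) :=
    Ideal.Quotient.isDomain _
  refine ⟨hD, ?_, inferInstance, ?_⟩
  · exact (LSSAux.theData K _ hl (by omega) (by omega)).normal
  · exact (LSSAux.theData K _ hl (by omega) (by omega)).free
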